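/- Let κ be a partition with at most n parts. Assume the non-symmetric Macdonald polynomial E_ν exists for every composition ν∈ℕ^n with ν^+=κ and that the symmetric Macdonald polynomial P_κ exists. Then P_κ = Σ_{ν : ν^+=κ} (d'_κ(q,t)/d'_ν(q,t))·E_ν. -/

import Mathlib

/- STATEMENT 7: P_κ = Σ_{ν : ν⁺=κ} (d'_κ(q,t)/d'_ν(q,t))·E_ν. -/

open Finset MvPolynomial

namespace Stmt7

/-- leg colength l'_η(i) -/
def legCo (n : ℕ) (η : Fin n → ℕ) (i : Fin n) : ℕ :=
  (univ.filter fun k => k < i ∧ η i ≤ η k).card +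
  (univ.filter fun k => i < k ∧ η i < η k).card

/-- leg length l(s) of the node s = (i,j) -/
def leg (n : ℕ) (η : Fin n → ℕ) (i : Fin n) (j : ℕ) : ℕ :=
  (univ.filter fun k => i < k ∧ j ≤ η k ∧ η k ≤ η i).card +
  (univ.filter fun k => k < i ∧ j ≤ η k + 1 ∧ η k + 1 ≤ η i).card

/-- The field K = ℚ(q,t). -/
abbrev K : Type := FractionRing (MvPolynomial (Fin 2) ℚ)

noncomputable def q : K := algebraMap (MvPolynomial (Fin 2) ℚ) K (X 0)
noncomputable def t : K := algebraMap (MvPolynomial (Fin 2) ℚ) K (X 1)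

/-- The polynomial ring K[x_1,…,x_n]. -/
abbrev P (n : ℕ) : Type := MvPolynomial (Fin n) K

/-- the automorphism s_k exchanging x_k and x_{k+1} (0-indexed; identity out of range) -/
noncomputable def sOp (n : ℕ) (k : ℕ) : P n →ₗ[K] P n :=
  if h : k + 1 < n then
    (rename (Equiv.swap (⟨k, Nat.lt_of_succ_lt h⟩ : Fin n) ⟨k + 1, h⟩)).toLinearMap
  else LinearMap.id

/-- τ_1 : x_1 ↦ qv·x_1 (the first variable is 0-indexed) -/
noncomputable def tauOp (n : ℕ) (qv : K) : P n →ₗ[K] P n :=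
  (aeval (fun j : Fin n => if (j : ℕ) = 0 then C qv * X j else X j)).toLinearMap

/-- ω := s_{n−1}⋯s_2 s_1 τ_1 -/
noncomputable def omegaOp (n : ℕ) (qv : K) : P n →ₗ[K] P n :=
  (List.range (n - 1)).foldl (fun acc k => sOp n k ∘ₗ acc) (tauOp n qv)

/-- The defining property of the Demazure–Lustig operators T_k (0-indexed), for the
parameter value tv: (x_k − x_{k+1})·(T_k f) = (x_k − x_{k+1})·tv·f
+ (tv·x_k − x_{k+1})·(s_k f − f), i.e. T_k f is the polynomial quotient from the usual
definition. -/
def IsDL (n : ℕ) (tv : K) (T : ℕ → P n →ₗ[K] P n) : Prop :=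
  ∀ k, ∀ hk : k + 1 < n, ∀ f : P n,
    (X (⟨k, Nat.lt_of_succ_lt hk⟩ : Fin n) - X ⟨k + 1, hk⟩) * T k f =
      (X (⟨k, Nat.lt_of_succ_lt hk⟩ : Fin n) - X ⟨k + 1, hk⟩) * (C tv * f) +
      (C tv * X (⟨k, Nat.lt_of_succ_lt hk⟩ : Fin n) - X ⟨k + 1, hk⟩) * (sOp n k f - f)

/-- T_k⁻¹ = tv⁻¹ − 1 + tv⁻¹ T_k -/
noncomputable def Tinv (n : ℕ) (tv : K) (T : ℕ → P n →ₗ[K] P n) (k : ℕ) : P n →ₗ[K] P n :=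
  tv⁻¹ • LinearMap.id - LinearMap.id + tv⁻¹ • T k

/-- The Cherednik operator Y_i (0-indexed i):
Y_i = tv^{i+1−n}·T_i⋯T_{n−2}·ω·T_0⁻¹⋯T_{i−1}⁻¹. -/
noncomputable def Yop (n : ℕ) (qv tv : K) (T : ℕ → P n →ₗ[K] P n) (i : Fin n) :
    P n →ₗ[K] P n :=
  (tv ^ (n - 1 - (i : ℕ)))⁻¹ •
    (((List.range' (i : ℕ) (n - 1 - (i : ℕ))).foldr (fun k acc => T k ∘ₗ acc) LinearMap.id) ∘ₗ
      omegaOp n qv ∘ₗ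
      ((List.range (i : ℕ)).foldr (fun k acc => Tinv n tv T k ∘ₗ acc) LinearMap.id))

/-- the decreasing rearrangement η⁺ of η -/
noncomputable def sortDesc (n : ℕ) (η : Fin n → ℕ) : Fin n → ℕ :=
  fun i => η (Tuple.sort η i.rev)

/-- dominance order on n-tuples (of equal sum) -/
def domLE (n : ℕ) (ν μ : Fin n → ℕ) : Prop :=
  (∑ i, ν i = ∑ i, μ i) ∧
  ∀ p : Fin n, ∑ i ∈ univ.filter (· ≤ p), ν i ≤ ∑ i ∈ univ.filter (· ≤ p), μ i

def domLT (n : ℕ) (ν μ : Fin n → ℕ) : Prop := domLE n ν μ ∧ ν ≠ μ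

/-- the order ≺ : ν ≺ η iff ν⁺ < η⁺, or ν⁺ = η⁺ and ν < η (dominance order) -/
noncomputable def prec (n : ℕ) (ν η : Fin n → ℕ) : Prop :=
  domLT n (sortDesc n ν) (sortDesc n η) ∨ (sortDesc n ν = sortDesc n η ∧ domLT n ν η)

/-- E is the non-symmetric Macdonald polynomial for the composition η (with parameters
qv, tv and Demazure–Lustig operators T): it has the triangular form
E = x^η + Σ_{ν≺η} b_{ην} x^ν and satisfies Y_i E = qv^{η_i}·tv^{−l'_η(i)}·E for all i. -/
noncomputable def IsNSMac (n : ℕ) (qv tv : K) (T : ℕ → P n →ₗ[K] P n)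
    (η : Fin n → ℕ) (E : P n) : Prop :=
  coeff (Finsupp.equivFunOnFinite.symm η) E = 1 ∧
  (∀ ν : Fin n →₀ ℕ, coeff ν E ≠ 0 → (ν : Fin n → ℕ) = η ∨ prec n (ν : Fin n → ℕ) η) ∧
  ∀ i : Fin n, Yop n qv tv T i E = (qv ^ η i / tv ^ legCo n η i) • E

/-- Pp is the symmetric Macdonald polynomial for the partition κ (with parameters qv, tv
and Demazure–Lustig operators T): it is symmetric, of the triangular form
m_κ + Σ_{μ<κ} u_{κμ} m_μ, and satisfies (Σ_i Y_i) Pp = (Σ_i qv^{κ_i}·tv^{1−i}) Pp. -/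
noncomputable def IsSymMac (n : ℕ) (qv tv : K) (T : ℕ → P n →ₗ[K] P n)
    (κ : Fin n → ℕ) (Pp : P n) : Prop :=
  Pp.IsSymmetric ∧
  coeff (Finsupp.equivFunOnFinite.symm κ) Pp = 1 ∧
  (∀ ν : Fin n →₀ ℕ, coeff ν Pp ≠ 0 →
    sortDesc n (ν : Fin n → ℕ) = κ ∨ domLT n (sortDesc n (ν : Fin n → ℕ)) κ) ∧
  (∑ i : Fin n, Yop n qv tv T i) Pp = (∑ i : Fin n, qv ^ κ i * (tv ^ (i : ℕ))⁻¹) • Pp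

/-- d'_η(q,t) = ∏_s (1 − q^{a(s)+1} t^{l(s)}) -/
noncomputable def dP' (n : ℕ) (η : Fin n → ℕ) : K :=
  ∏ i : Fin n, ∏ j ∈ Finset.Icc 1 (η i), (1 - q ^ (η i - j + 1) * t ^ (leg n η i j))

end Stmt7

open Stmt7

/-!
The operators `T_i` and the rotation `ω` satisfy the relations of the affine Hecke algebra, whence
the relations between `T_i`, `Y_i` and `Y_{i+1}`. If `Y_i f = α f` and `Y_{i+1} f = β f`, then
`T_i f + g f` with `(t - 1) α = g (β - α)` has the two eigenvalues exchanged. Applied to `E_ν` with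
`ν_i < ν_{i+1}` this yields `T_i E_ν + (1 - t d'_{s_i ν} / d'_ν) E_ν = t E_{s_i ν}`, and then
`E_ν / d'_ν + E_{s_i ν} / d'_{s_i ν}` is a multiple of `(T_i + 1) E_ν`, hence killed by `T_i - t`.
Summing over the rearrangements of `κ`, the right-hand side of the theorem is symmetric, and it is
an eigenvector of `Σ Y_i` with the same eigenvalue and the same coefficient of `x^κ` as `P_κ`.

Eigenvectors are determined by their leading coefficients because of a specialization: choose a
valuation ring of `ℚ(q,t)` over whose residue field `t` becomes `1` while `q` stays transcendental.
There `T_i` becomes `s_i` and `Y_i` becomes the substitution `x_i ↦ q x_i`, which is diagonal on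
monomials. A nonzero eigenvector, scaled to have unit content, stays nonzero under the reduction, so
it involves a monomial whose diagonal entries are the reduced eigenvalues.
-/

namespace Macdonald

section DemazureLustig

variable {σ R : Type*} [CommRing R]

theorem X_sub_X_ne_zero [Nontrivial R] {i j : σ} (hij : i ≠ j) :
    (X i - X j : MvPolynomial σ R) ≠ 0 :=
  sub_ne_zero.mpr fun h => hij (X_injective h)

local notation "ι" => algebraMap (MvPolynomial σ R) (FractionRing (MvPolynomial σ R))

theorem fraction_X_sub_X_ne_zero [IsDomain R] {i j : σ} (hij : i ≠ j) : ι (X i) - ι (X j) ≠ 0 := by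
  rw [← map_sub, map_ne_zero_iff _ (IsFractionRing.injective _ _)]
  exact X_sub_X_ne_zero hij

variable [DecidableEq σ]

/-- `T` is the Demazure–Lustig operator with parameter `t` in the variables `x_i` and `x_j`, in
division-free form: solving for `T f` gives `t f + (t x_i - x_j) (s f - f) / (x_i - x_j)`. -/
def IsDemazureLustig (t : R) (i j : σ) (T : Module.End R (MvPolynomial σ R)) : Prop :=
  ∀ f, (X i - X j) * T f =
    C (1 - t) * X j * f + (C t * X i - X j) * rename (Equiv.swap i j) f

variable [IsDomain R] {t : R}

namespace IsDemazureLustig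

variable {i j k l : σ} {T T' : Module.End R (MvPolynomial σ R)}

theorem fraction_rename_apply (h : IsDemazureLustig t i j T) (hij : i ≠ j) (e : Equiv.Perm σ)
    (f : MvPolynomial σ R) :
    ι (rename e (T f)) =
      (1 - ι (C t)) * ι (X (e j)) / (ι (X (e i)) - ι (X (e j))) * ι (rename e f) +
      (ι (C t) * ι (X (e i)) - ι (X (e j))) / (ι (X (e i)) - ι (X (e j))) *
        ι (rename (e * Equiv.swap i j) f) := by
  have hne := fraction_X_sub_X_ne_zero (R := R) (e.injective.ne hij)
  have key := congrArg (fun g => ι (rename e g)) (h f)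
  simp only [map_mul, map_sub, map_add, rename_X, rename_C, map_one, rename_rename] at key
  rw [Equiv.Perm.coe_mul]
  field_simp
  linear_combination key

theorem fraction_apply (h : IsDemazureLustig t i j T) (hij : i ≠ j) (f : MvPolynomial σ R) :
    ι (T f) =
      (1 - ι (C t)) * ι (X j) / (ι (X i) - ι (X j)) * ι f +
      (ι (C t) * ι (X i) - ι (X j)) / (ι (X i) - ι (X j)) * ι (rename (Equiv.swap i j) f) := by
  simpa using h.fraction_rename_apply hij 1 f

theorem mul_self (h : IsDemazureLustig t i j T) (hij : i ≠ j) :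
    T * T = (t - 1) • T + t • 1 := by
  refine LinearMap.ext fun f => IsFractionRing.injective _ (FractionRing (MvPolynomial σ R)) ?_
  have h₁ := fraction_X_sub_X_ne_zero (R := R) hij
  have h₂ := fraction_X_sub_X_ne_zero (R := R) hij.symm
  simp only [Module.End.mul_apply, LinearMap.add_apply, LinearMap.smul_apply, Module.End.one_apply,
    smul_eq_C_mul, map_add, map_mul, map_sub, map_one, h.fraction_apply hij,
    h.fraction_rename_apply hij, Equiv.swap_apply_left, Equiv.swap_apply_right,
    Equiv.swap_mul_self, Equiv.Perm.coe_one, rename_id_apply]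
  field_simp
  ring

theorem commute (h : IsDemazureLustig t i j T) (h' : IsDemazureLustig t k l T') (hij : i ≠ j)
    (hkl : k ≠ l) (hik : i ≠ k) (hil : i ≠ l) (hjk : j ≠ k) (hjl : j ≠ l) : Commute T T' := by
  refine LinearMap.ext fun f => IsFractionRing.injective _ (FractionRing (MvPolynomial σ R)) ?_
  have hcomm : Equiv.swap i j * Equiv.swap k l = Equiv.swap k l * Equiv.swap i j :=
    (Equiv.Perm.disjoint_swap_swap (by simp [*])).commute
  simp only [Module.End.mul_apply, h.fraction_apply hij, h'.fraction_apply hkl,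
    h.fraction_rename_apply hij, h'.fraction_rename_apply hkl, hcomm,
    Equiv.swap_apply_of_ne_of_ne hik.symm hjk.symm, Equiv.swap_apply_of_ne_of_ne hil.symm hjl.symm,
    Equiv.swap_apply_of_ne_of_ne hik hil, Equiv.swap_apply_of_ne_of_ne hjk hjl]
  ring

theorem braid (h : IsDemazureLustig t i j T) (h' : IsDemazureLustig t j k T') (hij : i ≠ j)
    (hjk : j ≠ k) (hik : i ≠ k) : T * T' * T = T' * T * T' := by
  refine LinearMap.ext fun f => IsFractionRing.injective _ (FractionRing (MvPolynomial σ R)) ?_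
  have h₁ := fraction_X_sub_X_ne_zero (R := R) hij
  have h₂ := fraction_X_sub_X_ne_zero (R := R) hjk
  have h₃ := fraction_X_sub_X_ne_zero (R := R) hik
  have h₄ := fraction_X_sub_X_ne_zero (R := R) hij.symm
  have h₅ := fraction_X_sub_X_ne_zero (R := R) hjk.symm
  have hbraid : Equiv.swap i j * Equiv.swap j k * Equiv.swap i j =
      Equiv.swap j k * Equiv.swap i j * Equiv.swap j k := by
    rw [Equiv.swap_comm i j, Equiv.swap_comm j k, Equiv.swap_mul_swap_mul_swap hjk.symm hik.symm,
      Equiv.swap_comm k j, Equiv.swap_comm j i, Equiv.swap_mul_swap_mul_swap hij hik,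
      Equiv.swap_comm]
  simp only [Module.End.mul_apply, h.fraction_apply hij, h'.fraction_apply hjk,
    h.fraction_rename_apply hij, h'.fraction_rename_apply hjk, Equiv.Perm.mul_apply,
    Equiv.swap_apply_left, Equiv.swap_apply_right, Equiv.swap_mul_self, Equiv.Perm.coe_one,
    rename_id_apply, hbraid, Equiv.swap_apply_of_ne_of_ne hij hik,
    Equiv.swap_apply_of_ne_of_ne hik.symm hjk.symm]
  field_simp
  ring

theorem apply_algHom_comm (h : IsDemazureLustig t i j T) (h' : IsDemazureLustig t k l T')
    (hkl : k ≠ l) (W : MvPolynomial σ R →ₐ[R] MvPolynomial σ R) (hi : W (X i) = X k)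
    (hj : W (X j) = X l)
    (hW : ∀ f, W (rename (Equiv.swap i j) f) = rename (Equiv.swap k l) (W f))
    (f : MvPolynomial σ R) : T' (W f) = W (T f) := by
  refine mul_left_cancel₀ (X_sub_X_ne_zero hkl) ?_
  have key := congrArg W (h f)
  simp only [map_mul, map_sub W, map_add, hi, hj, hW, algHom_C, algebraMap_eq] at key
  rw [h' (W f), key]

theorem rename_swap_eq_self (h : IsDemazureLustig t i j T) (hij : i ≠ j) {f : MvPolynomial σ R}
    (hf : T f = t • f) : rename (Equiv.swap i j) f = f := by
  have hne : (C t * X i - X j : MvPolynomial σ R) ≠ 0 := by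
    intro h0
    have hcoeff := congrArg (coeff (Finsupp.single j 1)) h0
    have hsingle : Finsupp.single i 1 ≠ Finsupp.single j 1 :=
      fun hs => hij (Finsupp.single_left_injective one_ne_zero hs)
    simp [coeff_C_mul, coeff_X, hsingle] at hcoeff
  refine mul_left_cancel₀ hne ?_
  have key := h f
  rw [hf, smul_eq_C_mul, C_sub, C_1] at key
  linear_combination -key

end IsDemazureLustig
end DemazureLustig

section Coefficients

variable {σ R : Type*} [CommRing R] [DecidableEq σ] {t : R} {i j : σ}
  {T : Module.End R (MvPolynomial σ R)}

theorem X_sub_X_dvd_rename_swap_sub (i j : σ) (f : MvPolynomial σ R) :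
    X i - X j ∣ rename (Equiv.swap i j) f - f := by
  induction f using MvPolynomial.induction_on with
  | C a => simp
  | add f g hf hg => simpa only [map_add, add_sub_add_comm] using dvd_add hf hg
  | mul_X f k hf =>
    have hX : (X i - X j : MvPolynomial σ R) ∣ X (Equiv.swap i j k) - X k := by
      rw [Equiv.swap_apply_def]
      split_ifs with hi hj
      · exact hi ▸ ⟨-1, by ring⟩
      · exact hj ▸ dvd_rfl
      · simp
    simpa only [map_mul, rename_X] using dvd_mul_sub_mul hf hX

namespace IsDemazureLustig

theorem coeff_apply_of_apply_eq_zero (h : IsDemazureLustig t i j T) (hij : i ≠ j)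
    (f : MvPolynomial σ R) {μ : σ →₀ ℕ} (hμ : μ j = 0) :
    coeff μ (T f) = t * coeff μ (rename (Equiv.swap i j) f) := by
  have key := congrArg (coeff (Finsupp.single i 1 + μ)) (h f)
  simpa [sub_mul, mul_assoc, coeff_C_mul, coeff_X_mul, coeff_X_mul', hij, hμ,
    Finsupp.single_apply] using key

theorem coeff_apply_add_single (h : IsDemazureLustig t i j T) (f : MvPolynomial σ R)
    (μ : σ →₀ ℕ) :
    coeff (μ + Finsupp.single j 1) (T f) =
      t * coeff (μ + Finsupp.single j 1) (rename (Equiv.swap i j) f) +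
      (coeff (μ + Finsupp.single i 1) (T f) + (1 - t) * coeff (μ + Finsupp.single i 1) f -
        coeff (μ + Finsupp.single i 1) (rename (Equiv.swap i j) f)) := by
  have key := congrArg (coeff (Finsupp.single i 1 + (μ + Finsupp.single j 1))) (h f)
  have hcomm : Finsupp.single i 1 + (μ + Finsupp.single j 1) =
      Finsupp.single j 1 + (μ + Finsupp.single i 1) := by abel
  simp only [sub_mul, mul_assoc, coeff_add, coeff_sub, coeff_C_mul, coeff_X_mul] at key
  simp only [hcomm, coeff_X_mul] at key
  linear_combination key

theorem coeff_apply (h : IsDemazureLustig t i j T) (hij : i ≠ j) (f : MvPolynomial σ R)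
    {μ : σ →₀ ℕ}
    (hf : ∀ m η, 0 < m → η + Finsupp.single j m = μ + Finsupp.single i m →
      coeff η f = 0 ∧ coeff η (rename (Equiv.swap i j) f) = 0) :
    coeff μ (T f) = t * coeff μ (rename (Equiv.swap i j) f) := by
  induction hd : μ j generalizing μ with
  | zero => exact h.coeff_apply_of_apply_eq_zero hij f hd
  | succ d ih =>
    obtain ⟨ρ, rfl⟩ : ∃ ρ, μ = ρ + Finsupp.single j 1 :=
      ⟨_, (tsub_add_cancel_of_le (Finsupp.single_le_iff.mpr (by omega))).symm⟩
    obtain ⟨hf₁, hsf₁⟩ := hf 1 (ρ + Finsupp.single i 1) one_pos (by abel)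
    have hρ : (ρ + Finsupp.single i 1 : σ →₀ ℕ) j = d := by simpa [hij] using hd
    rw [h.coeff_apply_add_single, ih (fun m η _ hη => hf (m + 1) η m.succ_pos ?_) hρ, hf₁, hsf₁]
    · ring
    · rw [Finsupp.single_add, ← add_assoc, hη, Finsupp.single_add]
      abel

end IsDemazureLustig
end Coefficients

section Shift

variable {σ R : Type*} [CommRing R]

/-- The permutation representation on polynomials. -/
noncomputable def permRep (σ R : Type*) [CommRing R] :
    Equiv.Perm σ →* Module.End R (MvPolynomial σ R) where
  toFun e := (rename e).toLinearMap
  map_one' := LinearMap.ext fun f => rename_id_apply f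
  map_mul' e e' := LinearMap.ext fun f => by simp [rename_rename]

@[simp]
theorem permRep_apply (e : Equiv.Perm σ) (f : MvPolynomial σ R) : permRep σ R e f = rename e f :=
  rfl

theorem coeff_rename_perm (e : Equiv.Perm σ) (f : MvPolynomial σ R) (η : σ →₀ ℕ) :
    coeff η (rename e f) = coeff (η.equivMapDomain e.symm) f := by
  rw [← coeff_rename_mapDomain e e.injective f (η.equivMapDomain e.symm),
    ← Finsupp.equivMapDomain_eq_mapDomain, ← Finsupp.equivMapDomain_trans, Equiv.symm_trans_self,
    Finsupp.equivMapDomain_refl]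

variable [DecidableEq σ]

/-- The substitution `x_i ↦ q x_i`, fixing the other variables. -/
noncomputable def qShift (q : R) (i : σ) : MvPolynomial σ R →ₐ[R] MvPolynomial σ R :=
  aeval fun j => if j = i then C q * X j else X j

theorem coeff_qShift (q : R) (i : σ) (f : MvPolynomial σ R) (η : σ →₀ ℕ) :
    coeff η (qShift q i f) = q ^ η i * coeff η f := by
  induction f using MvPolynomial.induction_on generalizing η with
  | C a =>
    rw [algHom_C, algebraMap_eq, coeff_C]
    split_ifs with h
    · simp [← h]
    · simp
  | add f g hf hg => rw [map_add, coeff_add, hf, hg, coeff_add, mul_add]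
  | mul_X f k hf =>
    have hX : qShift q i (X k) = C (if k = i then q else 1) * X k := by
      rw [qShift, aeval_X]
      split_ifs <;> simp
    rw [map_mul, hX, mul_left_comm, coeff_C_mul, coeff_mul_X', coeff_mul_X']
    by_cases hk : k ∈ η.support
    · rw [if_pos hk, if_pos hk, hf, Finsupp.tsub_apply, ← mul_assoc]
      split_ifs with hki
      · have hpos : 1 ≤ η k := Nat.one_le_iff_ne_zero.mpr (Finsupp.mem_support_iff.mp hk)
        rw [← hki, Finsupp.single_eq_same, ← pow_succ', Nat.sub_add_cancel hpos]
      · rw [Finsupp.single_eq_of_ne' hki, one_mul, Nat.sub_zero]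
    · rw [if_neg hk, if_neg hk, mul_zero, mul_zero]

theorem rename_qShift (q : R) (i : σ) (e : Equiv.Perm σ) (f : MvPolynomial σ R) :
    rename e (qShift q i f) = qShift q (e i) (rename e f) := by
  ext η
  simp [coeff_rename_perm, coeff_qShift]

theorem map_qShift {S : Type*} [CommRing S] (φ : R →+* S) (q : R) (i : σ)
    (f : MvPolynomial σ R) : map φ (qShift q i f) = qShift (φ q) i (map φ f) := by
  ext η
  simp [coeff_map, coeff_qShift]

end Shift

section Cherednik

variable {F A : Type*} [Field F] [Ring A] [Algebra F A] {N : ℕ} {t : F} {T : ℕ → Aˣ} {ω : A}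

theorem quadratic_inverse (ht : t ≠ 0) {T : A} (hT : T * T = (t - 1) • T + t • 1) :
    T * ((t⁻¹ - 1) • 1 + t⁻¹ • T) = 1 ∧ ((t⁻¹ - 1) • 1 + t⁻¹ • T) * T = 1 := by
  have hcoeff : t⁻¹ - 1 + t⁻¹ * (t - 1) = 0 := by
    field_simp
    ring
  have key : (t⁻¹ - 1) • T + t⁻¹ • (T * T) = 1 := by
    rw [hT, smul_add, smul_smul, smul_smul, inv_mul_cancel₀ ht, one_smul, ← add_assoc, ← add_smul,
      hcoeff, zero_smul, zero_add]
  exact ⟨by rw [mul_add, mul_smul_comm, mul_smul_comm, mul_one, key],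
    by rw [add_mul, smul_mul_assoc, smul_mul_assoc, one_mul, key]⟩

/-- A solution of the quadratic Hecke relation with parameter `t`, as a unit. -/
def unitOfQuadratic (ht : t ≠ 0) (T : A) (hT : T * T = (t - 1) • T + t • 1) : Aˣ where
  val := T
  inv := (t⁻¹ - 1) • 1 + t⁻¹ • T
  val_inv := (quadratic_inverse ht hT).1
  inv_val := (quadratic_inverse ht hT).2

theorem inv_eq_of_quadratic (ht : t ≠ 0) {T : Aˣ} (hT : (T * T : A) = (t - 1) • (T : A) + t • 1) :
    ((T⁻¹ : Aˣ) : A) = (t⁻¹ - 1) • 1 + t⁻¹ • (T : A) :=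
  Units.inv_eq_of_mul_eq_one_right (quadratic_inverse ht hT).1

-- The combination is a multiple of `(T + 1) v`, and `(T - t) (T + 1) = 0`.
theorem apply_inv_smul_add_inv_smul_of_quadratic {F M : Type*} [Field F] [AddCommGroup M]
    [Module F M] {t a b : F} (ht : t ≠ 0) (ha : a ≠ 0) (hb : b ≠ 0) {T : Module.End F M}
    (hT : T * T = (t - 1) • T + t • 1) {v w : M} (hvw : T v + (1 - t * b / a) • v = t • w) :
    T (a⁻¹ • v + b⁻¹ • w) = t • (a⁻¹ • v + b⁻¹ • w) := by
  have hmul : a⁻¹ • v + b⁻¹ • w = (t * b)⁻¹ • (T v + v) := by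
    rw [← inv_smul_smul₀ ht w, ← hvw]
    match_scalars
    · field_simp
      ring
    · field_simp
  have hquad : T (T v) = (t - 1) • T v + t • v := LinearMap.congr_fun hT v
  rw [hmul, map_smul, map_add, hquad, smul_comm t]
  congr 1
  module

/-- The relations of the affine Hecke algebra of `GL_{N+1}`, generated by `T_0, …, T_{N-1}` and the
element `ω` rotating them, that involve neither `ω⁻¹` nor `ω²`. The relation between `ω²`, `T_0` and
`T_{N-1}`, left out here, makes the Cherednik elements commute with each other; their relations with
the `T_i` do not depend on it. -/
structure IsAffineHecke (N : ℕ) (t : F) (T : ℕ → Aˣ) (ω : A) : Prop where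
  quadratic : ∀ k < N, (T k * T k : A) = (t - 1) • (T k : A) + t • 1
  braid : ∀ k, k + 1 < N → (T k * T (k + 1) * T k : A) = T (k + 1) * T k * T (k + 1)
  commute : ∀ k l, k + 1 < l → l < N → Commute (T k : A) (T l)
  rotate : ∀ k, k + 1 < N → T k * ω = ω * T (k + 1)

/-- The Cherednik element
`Y_i = t^{i-N} T_i ⋯ T_{N-1} ω T_0⁻¹ ⋯ T_{i-1}⁻¹`, with indices starting from `0`. -/
def cherednik (N : ℕ) (t : F) (T : ℕ → Aˣ) (ω : A) (i : ℕ) : A :=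
  (t ^ (N - i))⁻¹ • ((((List.range' i (N - i)).map T).prod : Aˣ) * ω *
    (((List.range i).map fun k => (T k)⁻¹).prod : Aˣ))

theorem mul_cherednik_succ_mul (ht : t ≠ 0) {i : ℕ} (hi : i < N) :
    T i * cherednik N t T ω (i + 1) * T i = t • cherednik N t T ω i := by
  obtain ⟨m, rfl⟩ := Nat.exists_eq_add_of_lt hi
  have h₁ : i + m + 1 - i = m + 1 := by omega
  have h₂ : i + m + 1 - (i + 1) = m := by omega
  simp only [cherednik, h₁, h₂, List.range'_succ, List.range_succ, List.map_cons, List.map_append,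
    List.prod_cons, List.prod_append, List.map_nil, List.prod_nil, mul_one, Units.val_mul,
    mul_smul_comm, smul_mul_assoc, mul_assoc, Units.inv_mul, smul_smul, pow_succ']
  rw [mul_inv, mul_inv_cancel_left₀ ht]

theorem cherednik_succ (ht : t ≠ 0) {i : ℕ} (hi : i < N) :
    cherednik N t T ω (i + 1) =
      t • ((((T i)⁻¹ : Aˣ) : A) * cherednik N t T ω i * ((T i)⁻¹ : Aˣ)) := by
  rw [← smul_mul_assoc, ← mul_smul_comm, ← mul_cherednik_succ_mul ht hi]
  simp [mul_assoc]

namespace IsAffineHecke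

theorem semiconjBy_mul (h : IsAffineHecke N t T ω) {k : ℕ} (hk : k + 1 < N) :
    SemiconjBy (T k * T (k + 1) : A) (T k) (T (k + 1)) := by
  rw [SemiconjBy, h.braid k hk, mul_assoc]

theorem semiconjBy_mul' (h : IsAffineHecke N t T ω) {k : ℕ} (hk : k + 1 < N) :
    SemiconjBy (T (k + 1) * T k : A) (T (k + 1)) (T k) := by
  rw [SemiconjBy, ← h.braid k hk, mul_assoc]

theorem commute_cherednik_zero (h : IsAffineHecke N t T ω) {k : ℕ} (hk : k + 1 < N) :
    Commute (T (k + 1) : A) (cherednik N t T ω 0) := by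
  obtain ⟨m, rfl⟩ : ∃ m, N = k + (m + 2) := ⟨N - k - 2, by omega⟩
  have hsplit : List.range' 0 (k + (m + 2)) =
      List.range' 0 k ++ k :: (k + 1) :: List.range' (k + 2) m := by
    rw [← List.range'_append_1, List.range'_succ, List.range'_succ, zero_add]
  have hlow : Commute ((((List.range' 0 k).map T).prod : Aˣ) : A) (T (k + 1)) := by
    refine (Commute.list_prod_left _ _ fun u hu => ?_).units_val
    obtain ⟨l, hl, rfl⟩ := List.mem_map.mp hu
    rw [List.mem_range'_1] at hl
    exact (h.commute l (k + 1) (by omega) hk).units_of_val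
  have hhigh : Commute ((((List.range' (k + 2) m).map T).prod : Aˣ) : A) (T k) := by
    refine (Commute.list_prod_left _ _ fun u hu => ?_).units_val
    obtain ⟨l, hl, rfl⟩ := List.mem_map.mp hu
    rw [List.mem_range'_1] at hl
    exact (h.commute k l (by omega) (by omega)).symm.units_of_val
  have hω : SemiconjBy ω (T (k + 1) : A) (T k) := (h.rotate k hk).symm
  have hT := (hlow.semiconjBy.mul_left (h.semiconjBy_mul hk)).mul_left hhigh.semiconjBy
  refine Commute.symm ?_
  simpa [cherednik, hsplit, mul_assoc] using
    Commute.smul_left (show Commute _ _ from hT.mul_left hω) _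

theorem commute_cherednik_of_lt (h : IsAffineHecke N t T ω) (ht : t ≠ 0) {i j : ℕ} (hji : j < i)
    (hi : i < N) : Commute (T i : A) (cherednik N t T ω j) := by
  induction j with
  | zero =>
    obtain ⟨k, rfl⟩ := Nat.exists_eq_succ_of_ne_zero hji.ne'
    exact h.commute_cherednik_zero hi
  | succ j ih =>
    have hT := ((h.commute j i hji hi).symm).units_inv_right
    rw [cherednik_succ ht (by omega)]
    exact ((hT.mul_right (ih (by omega))).mul_right hT).smul_right t

theorem commute_cherednik_add_two (h : IsAffineHecke N t T ω) (ht : t ≠ 0) {i : ℕ}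
    (hi : i + 1 < N) : Commute (T i : A) (cherednik N t T ω (i + 2)) := by
  have hinv := (h.semiconjBy_mul hi).units_inv_symm_left (a := T i * T (i + 1))
  have hinv' := (h.semiconjBy_mul' hi).units_inv_symm_left (a := T (i + 1) * T i)
  have hY := (h.commute_cherednik_of_lt ht i.lt_succ_self hi).symm
  rw [cherednik_succ ht hi, cherednik_succ ht (by omega)]
  have hprod := (hinv.mul_left hY).mul_left hinv'
  refine Commute.symm ?_
  simpa [mul_assoc] using (Commute.smul_left (show Commute _ _ from hprod) t).smul_left t

theorem commute_cherednik_of_gt (h : IsAffineHecke N t T ω) (ht : t ≠ 0) {i j : ℕ}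
    (hij : i + 2 ≤ j) (hj : j ≤ N) : Commute (T i : A) (cherednik N t T ω j) := by
  induction j, hij using Nat.le_induction with
  | base => exact h.commute_cherednik_add_two ht hj
  | succ j hij ih =>
    have hT := (h.commute i j hij hj).units_inv_right
    rw [cherednik_succ ht hj]
    exact ((hT.mul_right (ih (by omega))).mul_right hT).smul_right t

theorem cherednik_mul (h : IsAffineHecke N t T ω) (ht : t ≠ 0) {i : ℕ} (hi : i < N) :
    cherednik N t T ω i * T i =
      T i * cherednik N t T ω (i + 1) + (t - 1) • cherednik N t T ω i := by
  refine smul_right_injective A ht ?_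
  beta_reduce
  have hTYT := mul_cherednik_succ_mul (T := T) (ω := ω) ht hi
  calc t • (cherednik N t T ω i * T i)
      = T i * cherednik N t T ω (i + 1) * (T i * T i) := by
        rw [← smul_mul_assoc, ← hTYT, mul_assoc]
    _ = (t - 1) • (T i * cherednik N t T ω (i + 1) * T i) +
          t • (T i * cherednik N t T ω (i + 1)) := by
        rw [h.quadratic i hi, mul_add, mul_smul_comm, mul_smul_comm, mul_one]
    _ = _ := by
        rw [hTYT, smul_add, smul_comm, add_comm]

theorem cherednik_succ_mul (h : IsAffineHecke N t T ω) (ht : t ≠ 0) {i : ℕ} (hi : i < N) :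
    cherednik N t T ω (i + 1) * T i =
      T i * cherednik N t T ω i - (t - 1) • cherednik N t T ω i := by
  refine smul_right_injective A ht ?_
  beta_reduce
  have hTYT := mul_cherednik_succ_mul (T := T) (ω := ω) ht hi
  have key : t • (T i * cherednik N t T ω i) =
      (t - 1) • t • cherednik N t T ω i + t • (cherednik N t T ω (i + 1) * T i) := by
    calc t • (T i * cherednik N t T ω i)
        = T i * T i * (cherednik N t T ω (i + 1) * T i) := by
          rw [← mul_smul_comm, ← hTYT]; simp only [mul_assoc]
      _ = _ := by
          rw [h.quadratic i hi, add_mul, smul_mul_assoc, smul_mul_assoc, one_mul, ← mul_assoc,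
            hTYT]
  simp only [smul_sub, key, smul_comm t (t - 1), add_sub_cancel_left]

end IsAffineHecke

theorem IsAffineHecke.intertwiner {M : Type*} [AddCommGroup M] [Module F M]
    {T : ℕ → (Module.End F M)ˣ} {ω : Module.End F M} (h : IsAffineHecke N t T ω) (ht : t ≠ 0)
    {i : ℕ} (hi : i < N) {v : M} {α β g : F} (hα : cherednik N t T ω i v = α • v)
    (hβ : cherednik N t T ω (i + 1) v = β • v) (hg : (t - 1) * α = g * (β - α)) :
    cherednik N t T ω i ((T i : Module.End F M) v + g • v) =
        β • ((T i : Module.End F M) v + g • v) ∧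
      cherednik N t T ω (i + 1) ((T i : Module.End F M) v + g • v) =
        α • ((T i : Module.End F M) v + g • v) := by
  have h₁ := LinearMap.congr_fun (h.cherednik_mul ht hi) v
  have h₂ := LinearMap.congr_fun (h.cherednik_succ_mul ht hi) v
  simp only [Module.End.mul_apply, LinearMap.add_apply, LinearMap.sub_apply, LinearMap.smul_apply,
    hα, hβ, map_smul] at h₁ h₂
  rw [map_add, map_add, h₁, h₂, map_smul, map_smul, hα, hβ]
  constructor
  · match_scalars
    · ring
    · linear_combination hg
  · match_scalars
    · ring
    · linear_combination -hg

end Cherednik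

section Reduction

open IsLocalRing

variable {F σ : Type*} [Field F] {O : ValuationSubring F}

/-- `L` preserves the polynomials with coefficients in the valuation ring `O`, and `L'` is the
operator it induces over the residue field. -/
def ReducesTo (O : ValuationSubring F) (L : Module.End F (MvPolynomial σ F))
    (L' : Module.End (ResidueField O) (MvPolynomial σ (ResidueField O))) : Prop :=
  ∀ g : MvPolynomial σ O, ∃ h : MvPolynomial σ O,
    L (map (algebraMap O F) g) = map (algebraMap O F) h ∧
      map (residue O) h = L' (map (residue O) g)

namespace ReducesTo

variable {L M : Module.End F (MvPolynomial σ F)}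
  {L' M' : Module.End (ResidueField O) (MvPolynomial σ (ResidueField O))}

theorem one : ReducesTo O (1 : Module.End F (MvPolynomial σ F)) 1 :=
  fun g => ⟨g, rfl, rfl⟩

theorem mul (hL : ReducesTo O L L') (hM : ReducesTo O M M') : ReducesTo O (L * M) (L' * M') := by
  intro g
  obtain ⟨h, hMg, hM'g⟩ := hM g
  obtain ⟨k, hLh, hL'h⟩ := hL h
  exact ⟨k, by rw [Module.End.mul_apply, hMg, hLh], by rw [Module.End.mul_apply, hL'h, hM'g]⟩

theorem add (hL : ReducesTo O L L') (hM : ReducesTo O M M') : ReducesTo O (L + M) (L' + M') := by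
  intro g
  obtain ⟨h, hLg, hL'g⟩ := hL g
  obtain ⟨k, hMg, hM'g⟩ := hM g
  exact ⟨h + k, by simp [hLg, hMg], by simp [hL'g, hM'g]⟩

theorem smul (hL : ReducesTo O L L') (c : O) : ReducesTo O ((c : F) • L) (residue O c • L') := by
  intro g
  obtain ⟨h, hLg, hL'g⟩ := hL g
  exact ⟨C c * h, by simp [hLg, smul_eq_C_mul, ValuationSubring.algebraMap_apply],
    by simp [hL'g, smul_eq_C_mul]⟩

theorem sum {J : Type*} (s : Finset J) {L : J → Module.End F (MvPolynomial σ F)}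
    {L' : J → Module.End (ResidueField O) (MvPolynomial σ (ResidueField O))}
    (h : ∀ j ∈ s, ReducesTo O (L j) (L' j)) : ReducesTo O (∑ j ∈ s, L j) (∑ j ∈ s, L' j) := by
  classical
  induction s using Finset.induction_on with
  | empty => exact fun g => ⟨0, by simp⟩
  | insert j s hj ih =>
    rw [sum_insert hj, sum_insert hj]
    exact (h j (mem_insert_self j s)).add (ih fun k hk => h k (mem_insert_of_mem hk))

theorem list_prod {J : Type*} (l : List J) {L : J → Module.End F (MvPolynomial σ F)}
    {L' : J → Module.End (ResidueField O) (MvPolynomial σ (ResidueField O))}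
    (h : ∀ j ∈ l, ReducesTo O (L j) (L' j)) : ReducesTo O (l.map L).prod (l.map L').prod := by
  induction l with
  | nil => exact one
  | cons j l ih =>
    simp only [List.map_cons, List.prod_cons, List.mem_cons, forall_eq_or_imp] at h ⊢
    exact h.1.mul (ih h.2)

theorem permRep (e : Equiv.Perm σ) :
    ReducesTo O (permRep σ F e) (permRep σ (ResidueField O) e) :=
  fun g => ⟨rename e g, (map_rename _ _ _).symm, map_rename _ _ _⟩

theorem qShift [DecidableEq σ] (q : O) (i : σ) :
    ReducesTo O (qShift (q : F) i).toLinearMap (qShift (residue O q) i).toLinearMap :=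
  fun g => ⟨Macdonald.qShift q i g, (map_qShift (algebraMap O F) q i g).symm,
    map_qShift (residue O) q i g⟩

end ReducesTo

theorem exists_smul_map_eq_of_ne_zero {f : MvPolynomial σ F} (hf : f ≠ 0) :
    ∃ (c : F) (g : MvPolynomial σ O), c ≠ 0 ∧ f = c • map (algebraMap O F) g ∧
      map (residue O) g ≠ 0 := by
  obtain ⟨μ, hμ, hmax⟩ := f.support.exists_max_image (fun η => O.valuation (coeff η f))
    (support_nonempty.mpr hf)
  have hc : coeff μ f ≠ 0 := mem_support_iff.mp hμ
  obtain ⟨g, hg⟩ : (coeff μ f)⁻¹ • f ∈ Set.range (map (σ := σ) (algebraMap O F)) := by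
    rw [mem_range_map_iff_coeffs_subset]
    intro x hx
    obtain ⟨η, hη, rfl⟩ := mem_coeffs_iff.mp hx
    obtain ⟨a, ha⟩ := (O.valuation_le_iff _ _).mp (hmax η (support_smul hη))
    refine ⟨a, ?_⟩
    rw [coeff_smul, smul_eq_mul, ← ha, mul_left_comm, inv_mul_cancel₀ hc, mul_one,
      ValuationSubring.algebraMap_apply]
  refine ⟨coeff μ f, g, hc, by rw [hg, smul_inv_smul₀ hc], fun hzero => ?_⟩
  have hcoeff : coeff μ g = 1 := by
    apply FaithfulSMul.algebraMap_injective O F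
    rw [← coeff_map, hg, coeff_smul, smul_eq_mul, inv_mul_cancel₀ hc, map_one]
  simpa [coeff_map, hcoeff] using congrArg (coeff μ) hzero

theorem eq_zero_of_reducesTo {J : Type*} {L : J → Module.End F (MvPolynomial σ F)}
    {L' : J → Module.End (ResidueField O) (MvPolynomial σ (ResidueField O))}
    (hL : ∀ j, ReducesTo O (L j) (L' j)) {w : J → (σ →₀ ℕ) → ResidueField O}
    (hw : ∀ j g η, coeff η (L' j g) = w j η * coeff η g) {a : J → O} {f : MvPolynomial σ F}
    (hf : ∀ j, L j f = (a j : F) • f)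
    (hne : ∀ η, coeff η f ≠ 0 → ∃ j, w j η ≠ residue O (a j)) : f = 0 := by
  by_contra hf₀
  obtain ⟨c, g, hc, rfl, hg⟩ := exists_smul_map_eq_of_ne_zero (O := O) hf₀
  obtain ⟨η, hη⟩ := ne_zero_iff.mp hg
  have hgη : coeff η g ≠ 0 := fun h => hη (by rw [coeff_map, h, map_zero])
  have hinj := FaithfulSMul.algebraMap_injective O F
  obtain ⟨j, hj⟩ := hne η (by
    rw [coeff_smul, smul_eq_mul, coeff_map]
    exact mul_ne_zero hc ((map_ne_zero_iff _ hinj).mpr hgη))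
  obtain ⟨h, hLg, hL'g⟩ := hL j g
  have hh : h = C (a j) * g := by
    apply map_injective _ hinj
    have hfj := hf j
    rw [map_smul, smul_comm] at hfj
    rw [← hLg, smul_right_injective _ hc hfj, smul_eq_C_mul, map_mul, map_C,
      ValuationSubring.algebraMap_apply]
  have key := congrArg (coeff η) hL'g
  rw [hh, map_mul, map_C, coeff_C_mul, hw] at key
  exact hj (mul_right_cancel₀ hη key).symm

namespace IsDemazureLustig

variable [DecidableEq σ] {i j : σ} {t : O}

theorem reducesTo {T : Module.End F (MvPolynomial σ F)} (h : IsDemazureLustig (t : F) i j T)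
    (hij : i ≠ j) (ht : residue O t = 1) :
    ReducesTo O T (permRep σ (ResidueField O) (Equiv.swap i j)) := by
  intro g
  obtain ⟨d, hd⟩ := X_sub_X_dvd_rename_swap_sub i j g
  refine ⟨C t * g + (C t * X i - X j) * d, mul_left_cancel₀ (X_sub_X_ne_zero hij) ?_, ?_⟩
  · have hd' := congrArg (map (algebraMap O F)) hd
    simp only [map_sub (map (σ := σ) _), map_mul, map_add, map_X, map_C, map_rename] at hd' ⊢
    rw [h, C_sub, C_1, ValuationSubring.algebraMap_apply]
    linear_combination (C (t : F) * X i - X j) * hd'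
  · have hd' := congrArg (map (residue O)) hd
    simp only [map_sub, map_mul, map_add, map_X, map_C, map_rename, ht, C_1, one_mul] at hd' ⊢
    rw [← hd', permRep_apply, add_sub_cancel]

theorem inv_reducesTo {T : (Module.End F (MvPolynomial σ F))ˣ}
    (h : IsDemazureLustig (t : F) i j T) (hij : i ≠ j) (ht : residue O t = 1) :
    ReducesTo O (T⁻¹ : (Module.End F (MvPolynomial σ F))ˣ)
      (permRep σ (ResidueField O) (Equiv.swap i j)) := by
  obtain ⟨u, hu⟩ := ((residue_ne_zero_iff_isUnit t).mp (ht ▸ one_ne_zero)).exists_right_inv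
  have hu₁ : residue O u = 1 := by simpa [ht] using congrArg (residue O) hu
  have huF : (t : F) * u = 1 := mod_cast hu
  have hsum := (ReducesTo.one.smul (u - 1)).add ((h.reducesTo hij ht).smul u)
  rw [map_sub, map_one, hu₁, sub_self, zero_smul, zero_add, one_smul] at hsum
  rw [inv_eq_of_quadratic (left_ne_zero_of_mul_eq_one huF) (h.mul_self hij),
    inv_eq_of_mul_eq_one_right huF]
  exact mod_cast hsum

end IsDemazureLustig

end Reduction

section Specialization

open IsLocalRing

theorem exists_valuationSubring_residue_eq_zero_iff {R F : Type*} [CommRing R] [Field F]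
    [Algebra R F] [FaithfulSMul R F] (p : Ideal R) [p.IsPrime] :
    ∃ (O : ValuationSubring F) (φ : R →+* O), (∀ a, (φ a : F) = algebraMap R F a) ∧
      ∀ a, residue O (φ a) = 0 ↔ a ∈ p := by
  have : IsDomain R := (FaithfulSMul.algebraMap_injective R F).isDomain _
  have hunit (y : p.primeCompl) : IsUnit (algebraMap R F y) :=
    IsUnit.mk0 _ ((map_ne_zero_iff _ (FaithfulSMul.algebraMap_injective R F)).mpr
      fun h => y.2 (h ▸ p.zero_mem))
  obtain ⟨O, hO, hlocal⟩ := IsLocalRing.exists_factor_valuationRing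
    (IsLocalization.lift hunit : Localization.AtPrime p →+* F)
  refine ⟨O, (RingHom.codRestrict _ O.toSubring hO).comp (algebraMap R _),
    fun a => IsLocalization.lift_eq hunit a, fun a => ?_⟩
  rw [residue_eq_zero_iff, mem_maximalIdeal, mem_nonunits_iff, RingHom.comp_apply,
    isUnit_map_iff, IsLocalization.AtPrime.isUnit_to_map_iff _ p]
  exact not_not

/-- The parameters `q` and `t` lie in the valuation ring `O`; over its residue field `t` becomes
`1` while `q` remains generic. -/
structure IsSpecialization {F : Type*} [Field F] (O : ValuationSubring F) (q t : O) : Prop where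
  residue_t : residue O t = 1
  transcendental_q : Transcendental ℤ (residue O q)

theorem exists_isSpecialization :
    ∃ (O : ValuationSubring K) (q₀ t₀ : O), (q₀ : K) = q ∧ (t₀ : K) = t ∧
      IsSpecialization O q₀ t₀ := by
  let ε : MvPolynomial (Fin 2) ℚ →+* Polynomial ℚ := eval₂Hom Polynomial.C ![Polynomial.X, 1]
  have : (RingHom.ker ε).IsPrime := RingHom.ker_isPrime ε
  obtain ⟨O, φ, hφ, hres⟩ :=
    exists_valuationSubring_residue_eq_zero_iff (F := K) (RingHom.ker ε)
  refine ⟨O, φ (X 0), φ (X 1), hφ _, hφ _, ?_, transcendental_iff.mpr fun f hf => ?_⟩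
  · rw [← sub_eq_zero, ← map_one (residue O), ← map_one φ, ← map_sub, ← map_sub, hres]
    simp [ε, RingHom.mem_ker]
  · have hf' := hf
    change Polynomial.aeval (((residue O).comp φ).toIntAlgHom (X 0)) f = 0 at hf'
    rw [Polynomial.aeval_algHom_apply] at hf'
    have hε : ε.toIntAlgHom (Polynomial.aeval (X 0) f) = 0 := (hres _).mp hf'
    rw [← Polynomial.aeval_algHom_apply] at hε
    have hX : ε.toIntAlgHom (X 0) = Polynomial.X := by simp [ε]
    rw [hX] at hε
    exact transcendental_iff.mp ((Polynomial.transcendental_X ℚ).restrictScalars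
      (RingHom.injective_int (algebraMap ℤ ℚ))) f hε

namespace IsSpecialization

variable {F : Type*} [Field F] {O : ValuationSubring F} {q t : O}

theorem t_ne_zero (h : IsSpecialization O q t) : (t : F) ≠ 0 := by
  rintro h₀
  have := h.residue_t
  rw [(ZeroMemClass.coe_eq_zero).mp h₀, map_zero] at this
  exact zero_ne_one this

theorem residue_q_pow_injective (h : IsSpecialization O q t) :
    Function.Injective fun a : ℕ => residue O q ^ a := by
  intro a b hab
  have hpoly : (Polynomial.X ^ a : Polynomial ℤ) = Polynomial.X ^ b :=
    transcendental_iff_injective.mp h.transcendental_q (by simpa using hab)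
  simpa using congrArg Polynomial.natDegree hpoly

theorem q_pow_mul_t_pow_ne_one (h : IsSpecialization O q t) {a : ℕ} (ha : a ≠ 0) (b : ℕ) :
    (q : F) ^ a * (t : F) ^ b ≠ 1 := by
  intro hab
  have hO : q ^ a * t ^ b = 1 := mod_cast hab
  have hres := congrArg (residue O) hO
  rw [map_mul, map_pow, map_pow, h.residue_t, one_pow, mul_one, map_one] at hres
  exact ha (h.residue_q_pow_injective (by simpa using hres))

theorem exists_perm_of_sum_residue_q_pow_eq (h : IsSpecialization O q t) {ι : Type*} [Fintype ι]
    {η κ : ι → ℕ} (hsum : ∑ i, residue O q ^ η i = ∑ i, residue O q ^ κ i) :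
    ∃ e : Equiv.Perm ι, κ ∘ e = η := by
  have hpoly : (∑ i, Polynomial.X ^ η i : Polynomial ℤ) = ∑ i, Polynomial.X ^ κ i :=
    transcendental_iff_injective.mp h.transcendental_q (by simpa using hsum)
  have hcard (a : ℕ) : Fintype.card {i // η i = a} = Fintype.card {i // κ i = a} := by
    have hcoeff := congrArg (Polynomial.coeff · a) hpoly
    simp only [Polynomial.finsetSum_coeff, Polynomial.coeff_X_pow, sum_boole, eq_comm (a := a)]
      at hcoeff
    rw [Fintype.card_subtype, Fintype.card_subtype]
    exact_mod_cast hcoeff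
  exact ⟨Equiv.ofFiberEquiv fun a => Fintype.equivOfCardEq (hcard a),
    funext (Equiv.ofFiberEquiv_map _)⟩

theorem exists_coe_eq_inv_t_pow (h : IsSpecialization O q t) (l : ℕ) :
    ∃ u : O, (u : F) = ((t : F) ^ l)⁻¹ ∧ residue O u = 1 := by
  have hres : residue O (t ^ l) = 1 := by rw [map_pow, h.residue_t, one_pow]
  obtain ⟨u, hu⟩ :=
    ((residue_ne_zero_iff_isUnit (t ^ l)).mp (hres ▸ one_ne_zero)).exists_right_inv
  refine ⟨u, eq_inv_of_mul_eq_one_right (mod_cast hu), ?_⟩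
  simpa [hres] using congrArg (residue O) hu

end IsSpecialization

end Specialization

section RotatedShift

theorem IsDemazureLustig.mul_permRep_mul_qShift {σ R : Type*} [CommRing R] [IsDomain R]
    [DecidableEq σ] {t q : R} {i j m : σ} {e : Equiv.Perm σ}
    {T T' : Module.End R (MvPolynomial σ R)} (h : IsDemazureLustig t i j T)
    (h' : IsDemazureLustig t (e i) (e j) T') (hij : i ≠ j) (him : i ≠ m) (hjm : j ≠ m) :
    T' * (permRep σ R e * (qShift q m).toLinearMap) =
      permRep σ R e * (qShift q m).toLinearMap * T := by
  have hX {k : σ} (hk : k ≠ m) : (rename e).comp (qShift q m) (X k) = X (e k) := by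
    simp [qShift, hk]
  refine LinearMap.ext fun f => h.apply_algHom_comm h' (e.injective.ne hij)
    ((rename e).comp (qShift q m)) (hX him) (hX hjm) (fun g => ?_) f
  have hshift := rename_qShift q m (Equiv.swap i j) g
  rw [Equiv.swap_apply_of_ne_of_ne him.symm hjm.symm] at hshift
  rw [AlgHom.comp_apply, AlgHom.comp_apply, ← hshift, rename_rename, rename_rename,
    ← Equiv.Perm.coe_mul, ← Equiv.Perm.coe_mul, Equiv.mul_swap_eq_swap_mul]

theorem val_list_prod_units {M : Type*} [Monoid M] (l : List Mˣ) :
    (l.prod : M) = (l.map Units.val).prod :=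
  map_list_prod (Units.coeHom M) l

end RotatedShift

section CherednikOperators

open IsLocalRing

variable {n : ℕ}

/-- The transposition of the positions `k` and `k + 1`, or the identity if `n ≤ k + 1`. -/
def adjSwap (n k : ℕ) : Equiv.Perm (Fin n) :=
  if h : k + 1 < n then Equiv.swap ⟨k, Nat.lt_of_succ_lt h⟩ ⟨k + 1, h⟩ else 1

theorem adjSwap_of_lt {k : ℕ} (h : k + 1 < n) :
    adjSwap n k = Equiv.swap ⟨k, Nat.lt_of_succ_lt h⟩ ⟨k + 1, h⟩ :=
  dif_pos h

theorem adjSwap_inv (k : ℕ) : (adjSwap n k)⁻¹ = adjSwap n k := by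
  unfold adjSwap
  split_ifs <;> simp

theorem sOp_eq_permRep (k : ℕ) : sOp n k = permRep (Fin n) K (adjSwap n k) := by
  unfold sOp adjSwap
  split_ifs
  · rfl
  · exact (map_one _).symm

theorem prod_adjSwap_range (m : Fin n) : ((List.range m).map (adjSwap n)).prod = m.cycleRange := by
  obtain ⟨m, hm⟩ := m
  induction m with
  | zero => simp
  | succ m ih =>
    have hm' : m < n := Nat.lt_of_succ_lt hm
    rw [List.range_succ, List.map_append, List.prod_append, ih hm', List.map_singleton,
      List.prod_singleton, adjSwap_of_lt hm]
    have : NeZero n := ⟨by omega⟩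
    ext j
    rw [Equiv.Perm.mul_apply]
    obtain hj | rfl | rfl | hj :
        (j : ℕ) < m ∨ j = ⟨m, hm'⟩ ∨ j = ⟨m + 1, hm⟩ ∨ m + 1 < (j : ℕ) := by
      simp only [Fin.ext_iff]
      omega
    · rw [Equiv.swap_apply_of_ne_of_ne (by simp [Fin.ext_iff]; omega)
        (by simp [Fin.ext_iff]; omega),
        Fin.coe_cycleRange_of_lt hj, Fin.coe_cycleRange_of_lt (Nat.lt_succ_of_lt hj)]
    · rw [Equiv.swap_apply_left, Fin.cycleRange_of_gt (Fin.mk_lt_mk.mpr m.lt_succ_self),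
        Fin.coe_cycleRange_of_lt (Fin.mk_lt_mk.mpr m.lt_succ_self)]
    · rw [Equiv.swap_apply_right, Fin.cycleRange_self, Fin.cycleRange_self]
    · rw [Equiv.swap_apply_of_ne_of_ne (by simp [Fin.ext_iff]; omega)
        (by simp [Fin.ext_iff]; omega),
        Fin.cycleRange_of_gt (Nat.lt_of_succ_lt hj), Fin.cycleRange_of_gt hj]

theorem omegaOp_eq [NeZero n] (qv : K) :
    omegaOp n qv = permRep (Fin n) K ((List.range (n - 1)).map (adjSwap n)).prod⁻¹ *
      (qShift qv 0).toLinearMap := by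
  have htau : tauOp n qv = (qShift qv 0).toLinearMap := by
    simp only [tauOp, qShift, Fin.val_eq_zero_iff]
  rw [omegaOp, htau]
  induction n - 1 with
  | zero => simp
  | succ m ih =>
    rw [List.range_succ, List.foldl_append, ih, List.foldl_cons, List.foldl_nil, sOp_eq_permRep,
      List.map_append, List.prod_append, mul_inv_rev, map_mul, mul_assoc, List.map_singleton,
      List.prod_singleton, adjSwap_inv]
    rfl

variable {qv tv : K} {T : ℕ → P n →ₗ[K] P n}

theorem isDemazureLustig_of_isDL (hT : IsDL n tv T) {k : ℕ} (h : k + 1 < n) :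
    IsDemazureLustig tv ⟨k, Nat.lt_of_succ_lt h⟩ ⟨k + 1, h⟩ (T k) := by
  intro f
  rw [hT k h f, sOp_eq_permRep, adjSwap_of_lt h, permRep_apply, C_sub, C_1]
  ring

/-- The operators `T_k` as units of the endomorphism ring, extended by `1` for `n ≤ k + 1`. -/
noncomputable def heckeUnit (ht : tv ≠ 0) (hT : IsDL n tv T) (k : ℕ) :
    (Module.End K (P n))ˣ :=
  if h : k + 1 < n then
    unitOfQuadratic ht (T k) ((isDemazureLustig_of_isDL hT h).mul_self (by simp))
  else 1

theorem val_heckeUnit (ht : tv ≠ 0) (hT : IsDL n tv T) {k : ℕ} (h : k + 1 < n) :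
    (heckeUnit ht hT k : Module.End K (P n)) = T k := by
  rw [heckeUnit, dif_pos h]
  rfl

theorem val_inv_heckeUnit (ht : tv ≠ 0) (hT : IsDL n tv T) {k : ℕ} (h : k + 1 < n) :
    ((heckeUnit ht hT k)⁻¹ : (Module.End K (P n))ˣ) = Tinv n tv T k := by
  rw [heckeUnit, dif_pos h]
  refine LinearMap.ext fun f => ?_
  change (tv⁻¹ - 1) • f + tv⁻¹ • T k f = tv⁻¹ • f - f + tv⁻¹ • T k f
  rw [sub_smul, one_smul]

theorem isDemazureLustig_heckeUnit (ht : tv ≠ 0) (hT : IsDL n tv T) {k : ℕ} (h : k + 1 < n) :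
    IsDemazureLustig tv ⟨k, Nat.lt_of_succ_lt h⟩ ⟨k + 1, h⟩
      (heckeUnit ht hT k : Module.End K (P n)) :=
  val_heckeUnit ht hT h ▸ isDemazureLustig_of_isDL hT h

theorem isAffineHecke (ht : tv ≠ 0) (hT : IsDL n tv T) :
    IsAffineHecke (n - 1) tv (heckeUnit ht hT) (omegaOp n qv) where
  quadratic k hk := (isDemazureLustig_heckeUnit ht hT (by omega)).mul_self (by simp)
  braid k hk := (isDemazureLustig_heckeUnit ht hT (by omega)).braid
    (isDemazureLustig_heckeUnit ht hT (by omega)) (by simp) (by simp)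
    (by simp [Fin.ext_iff]; omega)
  commute k l hkl hl := (isDemazureLustig_heckeUnit ht hT (by omega)).commute
    (isDemazureLustig_heckeUnit ht hT (by omega)) (by simp) (by simp)
    (by simp [Fin.ext_iff]; omega) (by simp [Fin.ext_iff]; omega) (by simp [Fin.ext_iff]; omega)
    (by simp [Fin.ext_iff]; omega)
  rotate k hk := by
    have : NeZero n := ⟨by omega⟩
    have hcycle {l : ℕ} (hl : l + 1 < n) :
        (((List.range (n - 1)).map (adjSwap n)).prod⁻¹ : Equiv.Perm (Fin n)) ⟨l + 1, hl⟩ =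
          ⟨l, Nat.lt_of_succ_lt hl⟩ := by
      rw [Equiv.Perm.inv_eq_iff_eq, prod_adjSwap_range ⟨n - 1, by omega⟩, Fin.ext_iff,
        Fin.coe_cycleRange_of_lt (Fin.mk_lt_mk.mpr (by omega))]
    rw [omegaOp_eq]
    refine (isDemazureLustig_heckeUnit ht hT (by omega)).mul_permRep_mul_qShift ?_ (by simp)
      (by simp [Fin.ext_iff]) (by simp [Fin.ext_iff])
    rw [hcycle, hcycle]
    exact isDemazureLustig_heckeUnit ht hT (by omega)

theorem foldr_comp_eq_prod_map (L : ℕ → P n →ₗ[K] P n) (l : List ℕ) :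
    l.foldr (fun k acc => L k ∘ₗ acc) LinearMap.id =
      (l.map L : List (Module.End K (P n))).prod := by
  induction l with
  | nil => rfl
  | cons k l ih => rw [List.foldr_cons, ih, List.map_cons, List.prod_cons]; rfl

theorem Yop_eq_cherednik (ht : tv ≠ 0) (hT : IsDL n tv T) (i : Fin n) :
    Yop n qv tv T i = cherednik (n - 1) tv (heckeUnit ht hT) (omegaOp n qv) i := by
  have hlow : (List.range i).map (fun k => (((heckeUnit ht hT k)⁻¹ : _ˣ) : Module.End K (P n))) =
      (List.range i).map (Tinv n tv T) :=
    List.map_congr_left fun k hk => val_inv_heckeUnit ht hT (by rw [List.mem_range] at hk; omega)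
  have hhigh : (List.range' i (n - 1 - i)).map
      (fun k => (heckeUnit ht hT k : Module.End K (P n))) = (List.range' i (n - 1 - i)).map T :=
    List.map_congr_left fun k hk => val_heckeUnit ht hT (by rw [List.mem_range'_1] at hk; omega)
  rw [Yop, cherednik, foldr_comp_eq_prod_map, foldr_comp_eq_prod_map, val_list_prod_units,
    val_list_prod_units, List.map_map, List.map_map]
  simp only [Function.comp_def]
  rw [hlow, hhigh, mul_assoc]
  rfl

end CherednikOperators

section Uniqueness

open IsLocalRing

variable {n : ℕ} {O : ValuationSubring K} {q₀ t₀ : O} {T : ℕ → P n →ₗ[K] P n}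

theorem permRep_mul_qShift_mul_permRep {R : Type*} [CommRing R] [NeZero n] (q : R) (i : Fin n) :
    ((List.range' i (n - 1 - i)).map fun k => permRep (Fin n) R (adjSwap n k)).prod *
      (permRep (Fin n) R ((List.range (n - 1)).map (adjSwap n)).prod⁻¹ *
        (qShift q 0).toLinearMap) *
      ((List.range i).map fun k => permRep (Fin n) R (adjSwap n k)).prod =
    (qShift q i).toLinearMap := by
  have hprod (l : List ℕ) : (l.map fun k => permRep (Fin n) R (adjSwap n k)).prod =
      permRep (Fin n) R (l.map (adjSwap n)).prod := by
    rw [map_list_prod, List.map_map]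
    rfl
  have hsplit : List.range (n - 1) = List.range i ++ List.range' i (n - 1 - i) := by
    have happend := List.range'_append_1 (s := 0) (m := i) (n := n - 1 - i)
    rwa [zero_add, Nat.add_sub_cancel' (by omega), ← List.range_eq_range',
      ← List.range_eq_range', eq_comm] at happend
  rw [hprod, hprod, hsplit, List.map_append, List.prod_append, prod_adjSwap_range, mul_inv_rev,
    ← mul_assoc, ← map_mul, mul_inv_cancel_left]
  refine LinearMap.ext fun f => ?_
  have hshift := rename_qShift q 0 i.cycleRange⁻¹ (rename i.cycleRange f)
  rw [rename_rename, ← Equiv.Perm.coe_mul, inv_mul_cancel, Equiv.Perm.inv_def,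
    Fin.cycleRange_symm_zero] at hshift
  simpa using hshift

theorem IsSpecialization.reducesTo_Yop (h : IsSpecialization O q₀ t₀) (hT : IsDL n t₀ T)
    (i : Fin n) :
    ReducesTo O (Yop n q₀ t₀ T i) (qShift (residue O q₀) i).toLinearMap := by
  have : NeZero n := ⟨i.pos.ne'⟩
  obtain ⟨u, hu, hu₁⟩ := h.exists_coe_eq_inv_t_pow (n - 1 - i)
  have hswap {k : ℕ} (hk : k + 1 < n) :
      ReducesTo O (heckeUnit h.t_ne_zero hT k : Module.End K (P n))
        (permRep (Fin n) _ (adjSwap n k)) :=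
    adjSwap_of_lt hk ▸
      (isDemazureLustig_heckeUnit h.t_ne_zero hT hk).reducesTo (by simp) h.residue_t
  have hswap_inv {k : ℕ} (hk : k + 1 < n) :
      ReducesTo O ((heckeUnit h.t_ne_zero hT k)⁻¹ : (Module.End K (P n))ˣ)
        (permRep (Fin n) _ (adjSwap n k)) :=
    adjSwap_of_lt hk ▸
      (isDemazureLustig_heckeUnit h.t_ne_zero hT hk).inv_reducesTo (by simp) h.residue_t
  have hhigh := ReducesTo.list_prod (List.range' i (n - 1 - i)) fun k hk =>
    hswap (k := k) (by rw [List.mem_range'_1] at hk; omega)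
  have hlow := ReducesTo.list_prod (List.range i) fun k hk =>
    hswap_inv (k := k) (by rw [List.mem_range] at hk; omega)
  have hω : ReducesTo O (omegaOp n q₀) _ :=
    omegaOp_eq (n := n) (q₀ : K) ▸ (ReducesTo.permRep _).mul (ReducesTo.qShift q₀ 0)
  have hY := ((hhigh.mul hω).mul hlow).smul u
  rw [permRep_mul_qShift_mul_permRep, hu₁, one_smul, hu] at hY
  rw [Yop_eq_cherednik h.t_ne_zero hT, cherednik, val_list_prod_units, val_list_prod_units,
    List.map_map, List.map_map]
  exact hY

theorem IsSpecialization.eq_zero_of_Yop_apply_eq (h : IsSpecialization O q₀ t₀)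
    (hT : IsDL n t₀ T) {η : Fin n →₀ ℕ} {l : Fin n → ℕ} {f : P n}
    (hf : ∀ i, Yop n q₀ t₀ T i f = ((q₀ : K) ^ η i / (t₀ : K) ^ l i) • f)
    (hη : coeff η f = 0) : f = 0 := by
  choose u hu hu₁ using h.exists_coe_eq_inv_t_pow
  refine eq_zero_of_reducesTo (h.reducesTo_Yop hT) (fun i g μ => coeff_qShift _ i g μ)
    (a := fun i => q₀ ^ η i * u (l i)) (fun i => ?_) fun μ hμ => ?_
  · rw [hf i, div_eq_mul_inv, ← hu]
    push_cast
    rfl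
  · have hne : μ ≠ η := by
      rintro rfl
      exact hμ hη
    obtain ⟨i, hi⟩ := DFunLike.ne_iff.mp hne
    exact ⟨i, by simpa [hu₁] using h.residue_q_pow_injective.ne hi⟩

theorem IsSpecialization.eq_zero_of_sum_Yop_apply_eq (h : IsSpecialization O q₀ t₀)
    (hT : IsDL n t₀ T) {κ l : Fin n → ℕ} {f : P n}
    (hf : (∑ i, Yop n q₀ t₀ T i) f = (∑ i, (q₀ : K) ^ κ i * ((t₀ : K) ^ l i)⁻¹) • f)
    (hκ : ∀ e : Equiv.Perm (Fin n), coeff (Finsupp.equivFunOnFinite.symm (κ ∘ e)) f = 0) :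
    f = 0 := by
  choose u hu hu₁ using h.exists_coe_eq_inv_t_pow
  refine eq_zero_of_reducesTo (J := Unit)
    (fun _ => ReducesTo.sum univ fun i _ => h.reducesTo_Yop hT i)
    (w := fun _ μ => ∑ i, residue O q₀ ^ μ i) (fun _ g μ => ?_)
    (a := fun _ => ∑ i, q₀ ^ κ i * u (l i)) (fun _ => ?_) fun μ hμ => ⟨(), fun hsum => hμ ?_⟩
  · simp [coeff_qShift, sum_mul, coeff_sum]
  · simp only [hf, ← hu]
    push_cast
    rfl
  · simp only [map_sum, map_mul, map_pow, hu₁, mul_one] at hsum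
    obtain ⟨e, he⟩ := h.exists_perm_of_sum_residue_q_pow_eq hsum
    simpa [he] using hκ e

end Uniqueness

section Dominance

variable {n : ℕ} {κ μ ν : Fin n → ℕ}

theorem exists_comp_perm_eq_sortDesc (ν : Fin n → ℕ) :
    ∃ e : Equiv.Perm (Fin n), ν ∘ e = sortDesc n ν :=
  ⟨Fin.revPerm.trans (Tuple.sort ν), rfl⟩

theorem antitone_sortDesc (ν : Fin n → ℕ) : Antitone (sortDesc n ν) :=
  fun _ _ h => Tuple.monotone_sort ν (Fin.rev_le_rev.mpr h)

theorem sortDesc_comp_perm (ν : Fin n → ℕ) (e : Equiv.Perm (Fin n)) :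
    sortDesc n (ν ∘ e) = sortDesc n ν :=
  funext fun i => congrFun (Tuple.comp_perm_comp_sort_eq_comp_sort (f := ν) (σ := e)) i.rev

theorem sortDesc_eq_self (hκ : Antitone κ) : sortDesc n κ = κ := by
  have hrev : Monotone (κ ∘ Fin.revPerm) := fun _ _ h => hκ (Fin.rev_le_rev.mpr h)
  rw [← sortDesc_comp_perm κ Fin.revPerm]
  funext i
  simp [sortDesc, Tuple.sort_eq_refl_iff_monotone.mpr hrev]

theorem finite_setOf_sortDesc_eq (κ : Fin n → ℕ) : {ν | sortDesc n ν = κ}.Finite := by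
  refine (Set.finite_range fun e : Equiv.Perm (Fin n) => κ ∘ e).subset ?_
  rintro ν rfl
  obtain ⟨e, he⟩ := exists_comp_perm_eq_sortDesc ν
  exact ⟨e.symm, by simp only [← he, Function.comp_assoc, Equiv.self_comp_symm, Function.comp_id]⟩

theorem domLE_antisymm (h : domLE n ν μ) (h' : domLE n μ ν) : ν = μ := by
  have hinsert (i : Fin n) : univ.filter (· ≤ i) = insert i (univ.filter (· < i)) := by
    ext k
    simp [le_iff_eq_or_lt]
  funext i
  induction i using WellFoundedLT.induction with
  | ind i ih =>
    have hi := le_antisymm (h.2 i) (h'.2 i)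
    have hlt : ∑ k with k < i, ν k = ∑ k with k < i, μ k :=
      sum_congr rfl fun k hk => ih k (mem_filter.mp hk).2
    rw [hinsert, sum_insert (by simp), sum_insert (by simp), hlt] at hi
    exact Nat.add_right_cancel hi

theorem domLE_sortDesc (ν : Fin n → ℕ) : domLE n ν (sortDesc n ν) := by
  obtain ⟨e, he⟩ := exists_comp_perm_eq_sortDesc ν
  have hν : sortDesc n ν ∘ e.symm = ν := by
    rw [← he, Function.comp_assoc, Equiv.self_comp_symm, Function.comp_id]
  refine ⟨?_, fun p => ?_⟩
  · rw [← he]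
    exact (Equiv.sum_comp e ν).symm
  · have hmono : Monovary (sortDesc n ν) fun i => if i ≤ p then 1 else 0 := by
      refine (antitone_sortDesc ν).monovary fun i k hik => ?_
      split_ifs with hk hi
      exacts [le_rfl, (hi (hik.trans hk)).elim, Nat.zero_le _, le_rfl]
    have hsum := hmono.sum_comp_perm_mul_le_sum_mul (σ := e.symm)
    simpa [sum_filter, ← congrFun hν] using hsum

theorem sum_le_sum_of_domLE_of_isLowerSet (h : domLE n ν μ) {s : Finset (Fin n)}
    (hs : IsLowerSet (s : Set (Fin n))) : ∑ i ∈ s, ν i ≤ ∑ i ∈ s, μ i := by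
  obtain rfl | hne := s.eq_empty_or_nonempty
  · rfl
  · have hfilter : s = univ.filter (· ≤ s.max' hne) := by
      ext i
      simpa using ⟨s.le_max' i, fun hi => hs hi (s.max'_mem hne)⟩
    rw [hfilter]
    exact h.2 _

/-- The number of boxes of the diagram of `ν` in the columns to the right of the column `c`. -/
def boxesBeyond (c : ℕ) (ν : Fin n → ℕ) : ℕ := ∑ i, (ν i - c)

theorem boxesBeyond_comp_perm (c : ℕ) (ν : Fin n → ℕ) (e : Equiv.Perm (Fin n)) :
    boxesBeyond c (ν ∘ e) = boxesBeyond c ν :=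
  Equiv.sum_comp e fun i => ν i - c

theorem boxesBeyond_sortDesc (c : ℕ) (ν : Fin n → ℕ) :
    boxesBeyond c (sortDesc n ν) = boxesBeyond c ν := by
  obtain ⟨e, he⟩ := exists_comp_perm_eq_sortDesc ν
  rw [← he, boxesBeyond_comp_perm]

theorem boxesBeyond_le_of_domLE (h : domLE n ν μ) (hν : Antitone ν) (c : ℕ) :
    boxesBeyond c ν ≤ boxesBeyond c μ := by
  let s : Finset (Fin n) := {i | c < ν i}
  have hs : IsLowerSet (s : Set (Fin n)) := fun i k hki hi => by
    simp only [s, coe_filter, mem_univ, true_and, Set.mem_ofPred_eq] at hi ⊢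
    exact hi.trans_le (hν hki)
  refine (add_le_add_iff_right (∑ _i ∈ s, c)).mp ?_
  calc boxesBeyond c ν + ∑ _i ∈ s, c
      = ∑ i ∈ s, (ν i - c) + ∑ _i ∈ s, c := by
        congr 1
        refine (sum_subset (subset_univ s) fun i _ hi => ?_).symm
        simp only [s, mem_filter, mem_univ, true_and, not_lt] at hi
        exact Nat.sub_eq_zero_of_le hi
    _ = ∑ i ∈ s, ν i := by
        rw [← sum_add_distrib]
        exact sum_congr rfl fun i hi => Nat.sub_add_cancel (mem_filter.mp hi).2.le
    _ ≤ ∑ i ∈ s, μ i := sum_le_sum_of_domLE_of_isLowerSet h hs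
    _ ≤ ∑ i ∈ s, (μ i - c) + ∑ _i ∈ s, c := by
        rw [← sum_add_distrib]
        exact sum_le_sum fun i _ => le_tsub_add
    _ ≤ boxesBeyond c μ + ∑ _i ∈ s, c := by
        gcongr
        exact sum_le_sum_of_subset (subset_univ s)

theorem boxesBeyond_le_of_prec (h : prec n μ ν) (c : ℕ) : boxesBeyond c μ ≤ boxesBeyond c ν := by
  rw [← boxesBeyond_sortDesc c μ, ← boxesBeyond_sortDesc c ν]
  obtain h | h := h
  · exact boxesBeyond_le_of_domLE h.1 (antitone_sortDesc μ) c
  · rw [h.1]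

theorem boxesBeyond_lt_of_add_single_eq {i j : Fin n} (hij : i ≠ j) {m : ℕ} (hm : 0 < m)
    {η μ : Fin n →₀ ℕ} (h : η + Finsupp.single j m = μ + Finsupp.single i m) (hμ : μ j ≤ μ i) :
    boxesBeyond (μ i) μ < boxesBeyond (μ i) η := by
  have hcoord (k : Fin n) : η k + (if j = k then m else 0) = μ k + (if i = k then m else 0) := by
    simpa [Finsupp.single_apply] using DFunLike.congr_fun h k
  have hi : η i = μ i + m := by simpa [hij.symm] using hcoord i
  refine sum_lt_sum (fun k _ => ?_) ⟨i, mem_univ i, by omega⟩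
  obtain rfl | hjk := eq_or_ne j k
  · omega
  · have hk := hcoord k
    rw [if_neg hjk] at hk
    omega

theorem not_prec_comp_swap {i j : Fin n} (hij : i < j) (h : ν i < ν j) :
    ¬ prec n (ν ∘ Equiv.swap i j) ν := by
  rintro (hdom | hdom)
  · exact hdom.2 (sortDesc_comp_perm ν _)
  · refine (hdom.2.1.2 i).not_gt (sum_lt_sum (fun k hk => ?_) ⟨i, by simp, by simpa using h⟩)
    have hkj : k ≠ j := ((mem_filter.mp hk).2.trans_lt hij).ne
    obtain rfl | hki := eq_or_ne k i
    · simpa using h.le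
    · simp [Equiv.swap_apply_of_ne_of_ne hki hkj]

theorem not_prec_of_sortDesc_eq (hκ : Antitone κ) (hν : sortDesc n ν = κ) : ¬ prec n κ ν := by
  rintro (hdom | hdom)
  · exact hdom.2 (by rw [hν, sortDesc_eq_self hκ])
  · exact hdom.2.2 (domLE_antisymm hdom.2.1 (hν ▸ domLE_sortDesc ν))

end Dominance

section Legs

variable {n : ℕ} {i j : Fin n} {ν : Fin n → ℕ}

theorem swap_lt_swap_iff (hij : (i : ℕ) + 1 = j) (k m : Fin n) :
    Equiv.swap i j k < Equiv.swap i j m ↔ k < m ∧ ¬(k = i ∧ m = j) ∨ k = j ∧ m = i := by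
  simp only [Equiv.swap_apply_def, Fin.lt_def, Fin.ext_iff]
  split_ifs <;> omega

theorem comp_swap_eq_self (hν : ν i = ν j) : ν ∘ Equiv.swap i j = ν := by
  rw [Equiv.comp_swap_eq_update, hν, Function.update_eq_self, ← hν, Function.update_eq_self]

theorem perm_induction {p : Equiv.Perm (Fin n) → Prop} (one : p 1)
    (mul : ∀ σ τ, p σ → p τ → p (σ * τ))
    (swap : ∀ i j : Fin n, (i : ℕ) + 1 = j → p (Equiv.swap i j)) (σ : Equiv.Perm (Fin n)) :
    p σ := by
  obtain _ | n := n
  · exact Subsingleton.elim 1 σ ▸ one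
  · have hσ : σ ∈ Submonoid.closure
        (Set.range fun k : Fin n => Equiv.swap k.castSucc k.succ) := by
      rw [Equiv.Perm.mclosure_swap_castSucc_succ]
      trivial
    induction hσ using Submonoid.closure_induction with
    | mem σ hσ =>
      obtain ⟨k, rfl⟩ := hσ
      exact swap _ _ (by simp)
    | one => exact one
    | mul σ τ _ _ hσ hτ => exact mul σ τ hσ hτ

theorem legCo_eq_card (ν : Fin n → ℕ) (m : Fin n) :
    legCo n ν m = #{k | k < m ∧ ν m ≤ ν k ∨ m < k ∧ ν m < ν k} := by
  rw [legCo, filter_or, card_union_of_disjoint]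
  exact disjoint_filter.mpr fun k _ hlt hgt => hlt.1.asymm hgt.1

theorem leg_eq_card (ν : Fin n → ℕ) (m : Fin n) (p : ℕ) :
    leg n ν m p =
      #{k | m < k ∧ p ≤ ν k ∧ ν k ≤ ν m ∨ k < m ∧ p ≤ ν k + 1 ∧ ν k + 1 ≤ ν m} := by
  rw [leg, filter_or, card_union_of_disjoint]
  exact disjoint_filter.mpr fun k _ hgt hlt => hlt.1.asymm hgt.1

theorem legCo_of_antitone (hν : Antitone ν) (m : Fin n) : legCo n ν m = m := by
  rw [legCo_eq_card, ← Fin.card_Iio]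
  congr 1
  ext k
  simp only [mem_filter, mem_univ, true_and, mem_Iio]
  exact ⟨fun hk => hk.elim And.left fun h => absurd (hν h.1.le) h.2.not_ge,
    fun hk => Or.inl ⟨hk, hν hk.le⟩⟩

theorem legCo_comp_swap (hij : (i : ℕ) + 1 = j) (hν : ν i ≠ ν j) (m : Fin n) :
    legCo n (ν ∘ Equiv.swap i j) (Equiv.swap i j m) = legCo n ν m := by
  rw [legCo_eq_card, legCo_eq_card]
  refine (card_equiv (Equiv.swap i j) fun k => ?_).symm
  simp only [mem_filter, mem_univ, true_and, swap_lt_swap_iff hij, Function.comp_apply,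
    Equiv.swap_apply_self]
  grind

theorem legCo_eq_legCo_add_one (hij : (i : ℕ) + 1 = j) (hν : ν i = ν j) :
    legCo n ν j = legCo n ν i + 1 := by
  rw [legCo_eq_card, legCo_eq_card, ← card_insert_of_notMem (a := i) (by simp)]
  congr 1
  grind

theorem legCo_eq_legCo_add_leg (hij : (i : ℕ) + 1 = j) (hν : ν i < ν j) :
    legCo n ν i = legCo n ν j + leg n ν j (ν i + 1) := by
  rw [legCo_eq_card, legCo_eq_card, leg_eq_card, ← card_union_of_disjoint, ← add_left_inj 1,
    ← card_insert_of_notMem (a := i), ← card_insert_of_notMem (a := j)]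
  · congr 1
    grind
  · simp
  · simp
  · exact disjoint_filter.mpr (by grind)

theorem leg_comp_swap (hij : (i : ℕ) + 1 = j) (hν : ν i < ν j) {m : Fin n} {p : ℕ}
    (hmp : ¬(m = j ∧ p = ν i + 1)) :
    leg n (ν ∘ Equiv.swap i j) (Equiv.swap i j m) p = leg n ν m p := by
  rw [leg_eq_card, leg_eq_card]
  refine (card_equiv (Equiv.swap i j) fun k => ?_).symm
  simp only [mem_filter, mem_univ, true_and, swap_lt_swap_iff hij, Function.comp_apply,
    Equiv.swap_apply_self]
  grind

theorem leg_eq_leg_comp_swap_add_one (hij : (i : ℕ) + 1 = j) (hν : ν i < ν j) :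
    leg n ν j (ν i + 1) = leg n (ν ∘ Equiv.swap i j) i (ν i + 1) + 1 := by
  rw [leg_eq_card, leg_eq_card, ← card_insert_of_notMem (a := i) (by simp)]
  congr 1
  grind [Equiv.swap_apply_of_ne_of_ne, Equiv.swap_apply_left, Equiv.swap_apply_right]

theorem legCo_lt_legCo (hij : (i : ℕ) + 1 = j) (hν : ν i < ν j) :
    legCo n ν j < legCo n ν i := by
  rw [legCo_eq_legCo_add_leg hij hν, leg_eq_leg_comp_swap_add_one hij hν]
  omega

theorem sum_legCo_comp_perm {M : Type*} [AddCommMonoid M] (F : ℕ → ℕ → M) (ν : Fin n → ℕ)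
    (σ : Equiv.Perm (Fin n)) :
    ∑ m, F ((ν ∘ σ) m) (legCo n (ν ∘ σ) m) = ∑ m, F (ν m) (legCo n ν m) := by
  induction σ using perm_induction generalizing ν with
  | one => rfl
  | mul σ τ hσ hτ =>
    rw [Equiv.Perm.coe_mul, ← Function.comp_assoc, hτ, hσ]
  | swap i j hij =>
    obtain hν | hν := eq_or_ne (ν i) (ν j)
    · rw [comp_swap_eq_self hν]
    · rw [← Equiv.sum_comp (Equiv.swap i j)]
      simp only [legCo_comp_swap hij hν, Function.comp_apply, Equiv.swap_apply_self]

end Legs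

section Eigenvalues

theorem t_ne_zero : t ≠ 0 := by
  obtain ⟨O, q₀, t₀, -, ht, h⟩ := exists_isSpecialization
  exact ht ▸ h.t_ne_zero

theorem one_sub_q_pow_mul_t_pow_ne_zero {a : ℕ} (ha : a ≠ 0) (b : ℕ) :
    1 - q ^ a * t ^ b ≠ 0 := by
  obtain ⟨O, q₀, t₀, hq, ht, h⟩ := exists_isSpecialization
  exact sub_ne_zero.mpr (hq ▸ ht ▸ h.q_pow_mul_t_pow_ne_one ha b).symm

variable {n : ℕ} {i j : Fin n} {ν : Fin n → ℕ}

theorem dP'_ne_zero (ν : Fin n → ℕ) : dP' n ν ≠ 0 :=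
  prod_ne_zero_iff.mpr fun _ _ => prod_ne_zero_iff.mpr fun _ _ =>
    one_sub_q_pow_mul_t_pow_ne_zero (Nat.succ_ne_zero _) _

-- Only the box in row `j` and column `ν i + 1` changes its leg length under the exchange of rows.
theorem dP'_mul_eq_dP'_comp_swap_mul (hij : (i : ℕ) + 1 = j) (hν : ν i < ν j) {l : ℕ}
    (hl : legCo n ν i = legCo n ν j + l + 1) :
    dP' n ν * (1 - q ^ (ν j - ν i) * t ^ l) =
      dP' n (ν ∘ Equiv.swap i j) * (1 - q ^ (ν j - ν i) * t ^ (l + 1)) := by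
  have hlegCo := legCo_eq_legCo_add_leg hij hν
  have hleg := leg_eq_leg_comp_swap_add_one hij hν
  let boxes : Finset (Σ _ : Fin n, ℕ) := univ.sigma fun m => Icc 1 (ν m)
  let factor (legs : Fin n → ℕ → ℕ) (s : Σ _ : Fin n, ℕ) : K :=
    1 - q ^ (ν s.1 - s.2 + 1) * t ^ legs s.1 s.2
  let swapLeg (m : Fin n) : ℕ → ℕ := leg n (ν ∘ Equiv.swap i j) (Equiv.swap i j m)
  have hdP : dP' n ν = ∏ s ∈ boxes, factor (leg n ν) s := by
    rw [dP', prod_sigma']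
  have hdP_swap : dP' n (ν ∘ Equiv.swap i j) = ∏ s ∈ boxes, factor swapLeg s := by
    rw [dP', ← Equiv.prod_comp (Equiv.swap i j), prod_sigma']
    simp only [Function.comp_apply, Equiv.swap_apply_self, boxes, factor, swapLeg]
  have hbox : (⟨j, ν i + 1⟩ : Σ _ : Fin n, ℕ) ∈ boxes := by simpa [boxes] using hν
  have hrest : ∏ s ∈ boxes.erase ⟨j, ν i + 1⟩, factor (leg n ν) s =
      ∏ s ∈ boxes.erase ⟨j, ν i + 1⟩, factor swapLeg s := by
    refine prod_congr rfl fun ⟨m, p⟩ hs => ?_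
    have hmp : ¬(m = j ∧ p = ν i + 1) := by
      rintro ⟨rfl, rfl⟩
      exact (mem_erase.mp hs).1 rfl
    simp only [factor, swapLeg, leg_comp_swap hij hν hmp]
  have harm : ν j - (ν i + 1) + 1 = ν j - ν i := by omega
  have hl₁ : leg n ν j (ν i + 1) = l + 1 := by omega
  have hl₂ : leg n (ν ∘ Equiv.swap i j) i (ν i + 1) = l := by omega
  rw [hdP, hdP_swap, ← mul_prod_erase _ _ hbox, ← mul_prod_erase _ _ hbox, hrest]
  simp only [factor, swapLeg, Equiv.swap_apply_right, harm, hl₁, hl₂]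
  ring

/-- The eigenvalue `q^{ν_m} t^{-l'_ν(m)}` of the Cherednik operator `Y_m` on `E_ν`. -/
noncomputable def eigenvalue (ν : Fin n → ℕ) (m : Fin n) : K := q ^ ν m / t ^ legCo n ν m

theorem eigenvalue_comp_swap (hij : (i : ℕ) + 1 = j) (hν : ν i ≠ ν j) (m : Fin n) :
    eigenvalue (ν ∘ Equiv.swap i j) m = eigenvalue ν (Equiv.swap i j m) := by
  have hlegCo := legCo_comp_swap hij hν (Equiv.swap i j m)
  rw [Equiv.swap_apply_self] at hlegCo
  rw [eigenvalue, hlegCo, Function.comp_apply, eigenvalue]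

theorem t_mul_eigenvalue (hij : (i : ℕ) + 1 = j) (hν : ν i = ν j) :
    t * eigenvalue ν j = eigenvalue ν i := by
  have ht := t_ne_zero
  rw [eigenvalue, eigenvalue, legCo_eq_legCo_add_one hij hν, hν, pow_succ]
  field_simp

theorem dP'_mul_eigenvalue_sub (hij : (i : ℕ) + 1 = j) (hν : ν i < ν j) :
    dP' n ν * (t * eigenvalue ν i - eigenvalue ν j) =
      t * dP' n (ν ∘ Equiv.swap i j) * (eigenvalue ν i - eigenvalue ν j) := by
  obtain ⟨l, hl⟩ := Nat.exists_eq_add_of_lt (legCo_lt_legCo hij hν)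
  have hj : eigenvalue ν j = eigenvalue ν i * (q ^ (ν j - ν i) * t ^ (l + 1)) := by
    have ht := t_ne_zero
    rw [eigenvalue, eigenvalue, hl, ← Nat.add_sub_of_le hν.le, pow_add, Nat.add_sub_cancel_left,
      add_assoc, pow_add t]
    field_simp
  rw [hj]
  linear_combination t * eigenvalue ν i * dP'_mul_eq_dP'_comp_swap_mul hij hν hl

theorem sum_eigenvalue {κ : Fin n → ℕ} (hκ : Antitone κ) (hν : sortDesc n ν = κ) :
    ∑ m, eigenvalue ν m = ∑ m : Fin n, q ^ κ m * (t ^ (m : ℕ))⁻¹ := by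
  obtain ⟨e, he⟩ := exists_comp_perm_eq_sortDesc ν
  have hsum := sum_legCo_comp_perm (fun a l => q ^ a / t ^ l) ν e
  rw [he, hν] at hsum
  simpa only [eigenvalue, legCo_of_antitone hκ, div_eq_mul_inv] using hsum.symm

end Eigenvalues

section NonSymmetric

variable {n : ℕ} {T : ℕ → P n →ₗ[K] P n} {i j : Fin n} {ν : Fin n → ℕ} {E E' : P n}

theorem isDemazureLustig_apply (hT : IsDL n t T) (hij : (i : ℕ) + 1 = j) :
    IsDemazureLustig t i j (T i) := by
  obtain ⟨j, hj⟩ := j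
  obtain rfl : (i : ℕ) + 1 = j := hij
  exact isDemazureLustig_of_isDL hT hj

theorem Yop_intertwiner (hT : IsDL n t T) (hij : (i : ℕ) + 1 = j) {f : P n} {a : Fin n → K}
    {g : K} (hf : ∀ m, Yop n q t T m f = a m • f) (hg : (t - 1) * a i = g * (a j - a i))
    (m : Fin n) :
    Yop n q t T m (T i f + g • f) = a (Equiv.swap i j m) • (T i f + g • f) := by
  have hH := isAffineHecke (qv := q) t_ne_zero hT
  have hi : (i : ℕ) < n - 1 := by omega
  have hTi : (heckeUnit t_ne_zero hT i : Module.End K (P n)) = T i :=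
    val_heckeUnit t_ne_zero hT (by omega)
  simp only [Yop_eq_cherednik t_ne_zero hT] at hf ⊢
  have hfj := hf j
  rw [← hij] at hfj
  obtain ⟨hYi, hYj⟩ := hH.intertwiner t_ne_zero hi (hf i) hfj hg
  rw [hTi] at hYi hYj
  obtain rfl | hmi := eq_or_ne m i
  · rwa [Equiv.swap_apply_left]
  obtain rfl | hmj := eq_or_ne m j
  · rwa [Equiv.swap_apply_right, ← hij]
  rw [Equiv.swap_apply_of_ne_of_ne hmi hmj]
  have hcomm : Commute (T i : Module.End K (P n))
      (cherednik (n - 1) t (heckeUnit t_ne_zero hT) (omegaOp n q) m) := by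
    rw [← hTi]
    obtain hlt | hgt := lt_or_gt_of_ne (Fin.val_ne_of_ne hmi)
    · exact hH.commute_cherednik_of_lt t_ne_zero hlt hi
    · have := Fin.val_ne_of_ne hmj
      exact hH.commute_cherednik_of_gt t_ne_zero (by omega) (by omega)
  rw [map_add, map_smul, hf m, ← Module.End.mul_apply, ← hcomm.eq, Module.End.mul_apply, hf m,
    map_smul, smul_add, smul_comm g]

theorem eq_zero_of_Yop_apply_eq (hT : IsDL n t T) {l : Fin n → ℕ} {f : P n}
    (hf : ∀ m, Yop n q t T m f = (q ^ ν m / t ^ l m) • f)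
    (hν : coeff (Finsupp.equivFunOnFinite.symm ν) f = 0) : f = 0 := by
  obtain ⟨O, q₀, t₀, hq, ht, h⟩ := exists_isSpecialization
  rw [← ht] at hT
  rw [← hq, ← ht] at hf
  exact h.eq_zero_of_Yop_apply_eq hT hf hν

theorem coeff_equivFunOnFinite_rename (e : Equiv.Perm (Fin n)) (f : P n) (ν : Fin n → ℕ) :
    coeff (Finsupp.equivFunOnFinite.symm ν) (rename e f) =
      coeff (Finsupp.equivFunOnFinite.symm (ν ∘ e)) f := by
  rw [coeff_rename_perm]
  congr 1
  ext k
  simp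

theorem coeff_eq_zero_of_boxesBeyond_lt (hE : IsNSMac n q t T ν E) {c : ℕ} {η : Fin n →₀ ℕ}
    (h : boxesBeyond c ν < boxesBeyond c η) : coeff η E = 0 := by
  by_contra hη
  obtain rfl | hprec := hE.2.1 η hη
  · exact h.false
  · exact (boxesBeyond_le_of_prec hprec c).not_gt h

theorem coeff_comp_swap_apply (hT : IsDL n t T) (hij : (i : ℕ) + 1 = j)
    (hE : IsNSMac n q t T ν E) (hν : ν i ≤ ν j) :
    coeff (Finsupp.equivFunOnFinite.symm (ν ∘ Equiv.swap i j)) (T i E) = t := by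
  have hne : i ≠ j := Fin.ne_of_val_ne (by omega)
  rw [(isDemazureLustig_apply hT hij).coeff_apply hne, coeff_equivFunOnFinite_rename,
    Function.comp_assoc, ← Equiv.Perm.coe_mul, Equiv.swap_mul_self, Equiv.Perm.coe_one,
    Function.comp_id, hE.1, mul_one]
  intro m η hm hη
  have hlt := boxesBeyond_lt_of_add_single_eq hne hm hη (by simpa using hν)
  simp only [Finsupp.coe_equivFunOnFinite_symm, boxesBeyond_comp_perm] at hlt
  refine ⟨coeff_eq_zero_of_boxesBeyond_lt hE hlt, ?_⟩
  rw [coeff_rename_perm]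
  exact coeff_eq_zero_of_boxesBeyond_lt hE
    (hlt.trans_eq (boxesBeyond_comp_perm _ η (Equiv.swap i j)).symm)

theorem apply_eq_smul_of_eq (hT : IsDL n t T) (hij : (i : ℕ) + 1 = j)
    (hE : IsNSMac n q t T ν E) (hν : ν i = ν j) : T i E = t • E := by
  have hg : (t - 1) * eigenvalue ν i = -t * (eigenvalue ν j - eigenvalue ν i) := by
    linear_combination t_mul_eigenvalue hij hν
  have hY := Yop_intertwiner hT hij (a := eigenvalue ν) hE.2.2 hg
  have hzero : T i E + (-t) • E = 0 := by
    refine eq_zero_of_Yop_apply_eq hT (ν := ν) (l := legCo n ν ∘ Equiv.swap i j)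
      (fun m => (hY m).trans ?_) ?_
    · have hsm : ν (Equiv.swap i j m) = ν m := congrFun (comp_swap_eq_self hν) m
      simp only [eigenvalue, Function.comp_apply, hsm]
    · have hcoeff := coeff_comp_swap_apply hT hij hE hν.le
      rw [comp_swap_eq_self hν] at hcoeff
      rw [coeff_add, coeff_smul, hcoeff, hE.1, smul_eq_mul, mul_one, add_neg_cancel]
  rwa [neg_smul, ← sub_eq_add_neg, sub_eq_zero] at hzero

theorem apply_add_smul_eq_of_lt (hT : IsDL n t T) (hij : (i : ℕ) + 1 = j)
    (hE : IsNSMac n q t T ν E) (hE' : IsNSMac n q t T (ν ∘ Equiv.swap i j) E') (hν : ν i < ν j) :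
    T i E + (1 - t * dP' n (ν ∘ Equiv.swap i j) / dP' n ν) • E = t • E' := by
  have hg : (t - 1) * eigenvalue ν i = (1 - t * dP' n (ν ∘ Equiv.swap i j) / dP' n ν) *
      (eigenvalue ν j - eigenvalue ν i) := by
    have := dP'_ne_zero ν
    field_simp
    linear_combination dP'_mul_eigenvalue_sub hij hν
  have hY := Yop_intertwiner hT hij (a := eigenvalue ν) hE.2.2 hg
  refine sub_eq_zero.mp (eq_zero_of_Yop_apply_eq hT (ν := ν ∘ Equiv.swap i j)
    (l := legCo n (ν ∘ Equiv.swap i j)) (fun m => ?_) ?_)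
  · rw [map_sub, hY m, map_smul, hE'.2.2 m, ← eigenvalue_comp_swap hij hν.ne, smul_sub,
      smul_comm t, eigenvalue]
  · have hzero : coeff (Finsupp.equivFunOnFinite.symm (ν ∘ Equiv.swap i j)) E = 0 := by
      by_contra hne
      obtain heq | hprec := hE.2.1 _ hne
      · exact hν.ne' (by simpa using congrFun heq i)
      · exact not_prec_comp_swap (Fin.lt_def.mpr (by omega)) hν hprec
    rw [coeff_sub, coeff_add, coeff_smul, coeff_smul, coeff_comp_swap_apply hT hij hE hν.le, hzero,
      hE'.1, smul_zero, add_zero, smul_eq_mul, mul_one, sub_self]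

theorem apply_inv_smul_add_inv_smul_of_lt (hT : IsDL n t T) (hij : (i : ℕ) + 1 = j)
    (hE : IsNSMac n q t T ν E) (hE' : IsNSMac n q t T (ν ∘ Equiv.swap i j) E') (hν : ν i < ν j) :
    T i ((dP' n ν)⁻¹ • E + (dP' n (ν ∘ Equiv.swap i j))⁻¹ • E') =
      t • ((dP' n ν)⁻¹ • E + (dP' n (ν ∘ Equiv.swap i j))⁻¹ • E') :=
  apply_inv_smul_add_inv_smul_of_quadratic t_ne_zero (dP'_ne_zero _) (dP'_ne_zero _)
    ((isDemazureLustig_apply hT hij).mul_self (Fin.ne_of_val_ne (by omega)))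
    (apply_add_smul_eq_of_lt hT hij hE hE' hν)

theorem apply_inv_smul_add_inv_smul (hT : IsDL n t T) (hij : (i : ℕ) + 1 = j)
    (hE : IsNSMac n q t T ν E) (hE' : IsNSMac n q t T (ν ∘ Equiv.swap i j) E') :
    T i ((dP' n ν)⁻¹ • E + (dP' n (ν ∘ Equiv.swap i j))⁻¹ • E') =
      t • ((dP' n ν)⁻¹ • E + (dP' n (ν ∘ Equiv.swap i j))⁻¹ • E') := by
  obtain hν | hν | hν := lt_trichotomy (ν i) (ν j)
  · exact apply_inv_smul_add_inv_smul_of_lt hT hij hE hE' hν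
  · rw [map_add, map_smul, map_smul, apply_eq_smul_of_eq hT hij hE hν,
      apply_eq_smul_of_eq hT hij hE' (by simpa using hν.symm), smul_add, smul_comm t, smul_comm t]
  · have hswap : (ν ∘ Equiv.swap i j) ∘ Equiv.swap i j = ν := by
      rw [Function.comp_assoc, ← Equiv.Perm.coe_mul, Equiv.swap_mul_self, Equiv.Perm.coe_one,
        Function.comp_id]
    have h := apply_inv_smul_add_inv_smul_of_lt hT hij hE' (hswap.symm ▸ hE) (by simpa using hν)
    rwa [hswap, add_comm] at h

end NonSymmetric

section Symmetric

variable {n : ℕ} {T : ℕ → P n →ₗ[K] P n} {κ : Fin n → ℕ} {E : (Fin n → ℕ) → P n}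

theorem coeff_comp_perm_of_isSymmetric {f : P n} (hf : f.IsSymmetric) (ν : Fin n → ℕ)
    (e : Equiv.Perm (Fin n)) :
    coeff (Finsupp.equivFunOnFinite.symm (ν ∘ e)) f =
      coeff (Finsupp.equivFunOnFinite.symm ν) f := by
  rw [← coeff_equivFunOnFinite_rename, hf e]

theorem isSymmetric_of_apply_eq_smul (hT : IsDL n t T) {f : P n}
    (hf : ∀ i : Fin n, (i : ℕ) + 1 < n → T i f = t • f) : f.IsSymmetric := by
  intro e
  induction e using perm_induction with
  | one => exact rename_id_apply f
  | mul σ τ hσ hτ => rw [Equiv.Perm.coe_mul, ← rename_rename, hτ, hσ]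
  | swap i j hij =>
    exact (isDemazureLustig_apply hT hij).rename_swap_eq_self (Fin.ne_of_val_ne (by omega))
      (hf i (by omega))

theorem eq_of_isSymmetric_of_sum_Yop_apply_eq (hT : IsDL n t T) {f g : P n}
    (hf : f.IsSymmetric) (hg : g.IsSymmetric)
    (hκ : coeff (Finsupp.equivFunOnFinite.symm κ) f = coeff (Finsupp.equivFunOnFinite.symm κ) g)
    (hYf : (∑ i, Yop n q t T i) f = (∑ i : Fin n, q ^ κ i * (t ^ (i : ℕ))⁻¹) • f)
    (hYg : (∑ i, Yop n q t T i) g = (∑ i : Fin n, q ^ κ i * (t ^ (i : ℕ))⁻¹) • g) : f = g := by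
  have hY : (∑ i, Yop n q t T i) (f - g) =
      (∑ i : Fin n, q ^ κ i * (t ^ (i : ℕ))⁻¹) • (f - g) := by
    rw [map_sub, hYf, hYg, smul_sub]
  have hcoeff (e : Equiv.Perm (Fin n)) :
      coeff (Finsupp.equivFunOnFinite.symm (κ ∘ e)) (f - g) = 0 := by
    rw [coeff_comp_perm_of_isSymmetric (hf.sub hg), coeff_sub, hκ, sub_self]
  obtain ⟨O, q₀, t₀, hq, ht, h⟩ := exists_isSpecialization
  rw [← ht] at hT
  rw [← hq, ← ht] at hY
  exact sub_eq_zero.mp (h.eq_zero_of_sum_Yop_apply_eq hT hY hcoeff)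

/-- The combination `Σ_ν (d'_κ / d'_ν) E_ν` over the rearrangements `ν` of `κ`. -/
noncomputable def symmetrizedSum (κ : Fin n → ℕ) (E : (Fin n → ℕ) → P n) : P n :=
  ∑ᶠ ν ∈ {ν : Fin n → ℕ | sortDesc n ν = κ}, (dP' n κ / dP' n ν) • E ν

/-- The rearrangements of the partition `κ`. -/
noncomputable def rearrangements (κ : Fin n → ℕ) : Finset (Fin n → ℕ) :=
  (finite_setOf_sortDesc_eq κ).toFinset

theorem mem_rearrangements {ν : Fin n → ℕ} : ν ∈ rearrangements κ ↔ sortDesc n ν = κ :=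
  (finite_setOf_sortDesc_eq κ).mem_toFinset

theorem symmetrizedSum_eq_sum (κ : Fin n → ℕ) (E : (Fin n → ℕ) → P n) :
    symmetrizedSum κ E = dP' n κ • ∑ ν ∈ rearrangements κ, (dP' n ν)⁻¹ • E ν := by
  simp only [symmetrizedSum, rearrangements, smul_sum, smul_smul, ← div_eq_mul_inv]
  exact finsum_mem_eq_finite_toFinset_sum _ (finite_setOf_sortDesc_eq κ)

theorem sum_rearrangements_comp_perm {M : Type*} [AddCommMonoid M] (F : (Fin n → ℕ) → M)
    (e : Equiv.Perm (Fin n)) :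
    ∑ ν ∈ rearrangements κ, F (ν ∘ e) = ∑ ν ∈ rearrangements κ, F ν :=
  sum_equiv (e.symm.arrowCongr (Equiv.refl ℕ))
    (fun ν => by simp only [mem_rearrangements, ← sortDesc_comp_perm ν e]; rfl) fun _ _ => rfl

-- Twice the sum is a sum of `t`-eigenvectors, one for each pair `ν, s_i ν`.
theorem apply_symmetrizedSum (hT : IsDL n t T)
    (hE : ∀ ν : Fin n → ℕ, sortDesc n ν = κ → IsNSMac n q t T ν (E ν)) (i : Fin n)
    (hi : (i : ℕ) + 1 < n) : T i (symmetrizedSum κ E) = t • symmetrizedSum κ E := by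
  let s : Equiv.Perm (Fin n) := Equiv.swap i ⟨i + 1, hi⟩
  let pair (ν : Fin n → ℕ) : P n := (dP' n ν)⁻¹ • E ν + (dP' n (ν ∘ s))⁻¹ • E (ν ∘ s)
  have hpair : ∀ ν ∈ rearrangements κ, T i (pair ν) = t • pair ν := fun ν hν => by
    rw [mem_rearrangements] at hν
    exact apply_inv_smul_add_inv_smul hT rfl (hE ν hν) (hE _ (by rw [sortDesc_comp_perm, hν]))
  have htwo : ∑ ν ∈ rearrangements κ, (dP' n ν)⁻¹ • E ν =
      (2 : K)⁻¹ • ∑ ν ∈ rearrangements κ, pair ν := by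
    rw [sum_add_distrib, sum_rearrangements_comp_perm fun ν => (dP' n ν)⁻¹ • E ν, ← two_smul K,
      inv_smul_smul₀ two_ne_zero]
  rw [symmetrizedSum_eq_sum, htwo, map_smul, map_smul, map_sum, sum_congr rfl hpair, ← smul_sum,
    smul_comm t, smul_comm t]

theorem isSymmetric_symmetrizedSum (hT : IsDL n t T)
    (hE : ∀ ν : Fin n → ℕ, sortDesc n ν = κ → IsNSMac n q t T ν (E ν)) :
    (symmetrizedSum κ E).IsSymmetric :=
  isSymmetric_of_apply_eq_smul hT (apply_symmetrizedSum hT hE)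

theorem coeff_symmetrizedSum (hκ : Antitone κ)
    (hE : ∀ ν : Fin n → ℕ, sortDesc n ν = κ → IsNSMac n q t T ν (E ν)) :
    coeff (Finsupp.equivFunOnFinite.symm κ) (symmetrizedSum κ E) = 1 := by
  have hκκ : sortDesc n κ = κ := sortDesc_eq_self hκ
  rw [symmetrizedSum_eq_sum, coeff_smul, coeff_sum,
    sum_eq_single_of_mem κ (mem_rearrangements.mpr hκκ) fun ν hν hne => ?_, coeff_smul,
    (hE κ hκκ).1, smul_eq_mul, smul_eq_mul, mul_one, mul_inv_cancel₀ (dP'_ne_zero κ)]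
  rw [mem_rearrangements] at hν
  rw [coeff_smul, smul_eq_zero]
  refine Or.inr (by_contra fun h => ?_)
  exact ((hE ν hν).2.1 _ h).elim hne.symm (not_prec_of_sortDesc_eq hκ hν)

theorem sum_Yop_symmetrizedSum (hκ : Antitone κ)
    (hE : ∀ ν : Fin n → ℕ, sortDesc n ν = κ → IsNSMac n q t T ν (E ν)) :
    (∑ i, Yop n q t T i) (symmetrizedSum κ E) =
      (∑ i : Fin n, q ^ κ i * (t ^ (i : ℕ))⁻¹) • symmetrizedSum κ E := by
  have hY : ∀ ν ∈ rearrangements κ, (∑ i, Yop n q t T i) ((dP' n ν)⁻¹ • E ν) =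
      (∑ i : Fin n, q ^ κ i * (t ^ (i : ℕ))⁻¹) • (dP' n ν)⁻¹ • E ν := fun ν hν => by
    rw [mem_rearrangements] at hν
    rw [map_smul, LinearMap.sum_apply, sum_congr rfl fun i _ => (hE ν hν).2.2 i, ← sum_smul,
      smul_comm, ← sum_eigenvalue hκ hν]
    rfl
  rw [symmetrizedSum_eq_sum, map_smul, map_sum, sum_congr rfl hY, ← smul_sum, smul_comm]

end Symmetric

end Macdonald

open Macdonald

theorem stmt_7 (n : ℕ) (κ : Fin n → ℕ) (hκ : Antitone κ)
    (T : ℕ → P n →ₗ[K] P n) (hT : IsDL n t T)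
    (E : (Fin n → ℕ) → P n) (hE : ∀ ν : Fin n → ℕ, sortDesc n ν = κ → IsNSMac n q t T ν (E ν))
    (Pp : P n) (hPp : IsSymMac n q t T κ Pp) :
    Pp = ∑ᶠ ν ∈ {ν : Fin n → ℕ | sortDesc n ν = κ}, (dP' n κ / dP' n ν) • E ν := by
  obtain ⟨hsymm, hcoeff, -, hY⟩ := hPp
  exact eq_of_isSymmetric_of_sum_Yop_apply_eq hT hsymm (isSymmetric_symmetrizedSum hT hE)
    (hcoeff.trans (coeff_symmetrizedSum hκ hE).symm) hY (sum_Yop_symmetrizedSum hκ hE)
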